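/- Suppose 𝒴 = span(ℝ^N_0, Y_1,…,Y_R) is a finite-dimensional vector subspace of L^0(Ω,𝐅_T,P) with ℝ^N_0 ⊆ 𝒴, and NCA(𝒴) holds. Then for every f ∈ L^0(Ω,𝐅_T,P) and every φ ∈ L^0(Ω,𝐅_T,P) such that max{|f^i|, |Y^i_1|, …, |Y^i_R|} ≤ φ^i P-a.s. for every i, one has ℳ^φ_e(𝒴) ≠ ∅ and ρ^𝒴_+(f) = sup{Σ_{i=1}^N E_{Q^i}[f^i] : Q ∈ ℳ^φ_e(𝒴)} > −∞. Moreover, whenever ρ^𝒴_+(f) < +∞ the superhedging price ρ^𝒴_+(f) is attained. -/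

import Mathlib

open MeasureTheory Filter Topology

namespace CollectiveArb

variable {Ω : Type*}

/-- Terminal gains `K_i` of admissible (predictable) strategies for an agent with
filtration `F`, trading the assets indexed by `A`, over times `1,…,T`. -/
def gainsSet {J : ℕ} (F : ℕ → MeasurableSpace Ω) (T : ℕ)
    (A : Finset (Fin J)) (X : Fin J → ℕ → Ω → ℝ) : Set (Ω → ℝ) :=
  { g | ∃ H : Fin J → ℕ → Ω → ℝ,
      (∀ j ∈ A, ∀ s, 1 ≤ s → s ≤ T → Measurable[F (s - 1)] (H j s)) ∧
      g = fun ω => ∑ j ∈ A, ∑ s ∈ Finset.Icc 1 T, H j s ω * (X j s ω - X j (s - 1) ω) }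

/-- No collective arbitrage for the gains sets `K` and the exchange set `Y`:
`(K₁ × ⋯ × K_N + Y) ∩ L⁰₊ = {0}`. -/
def NCA {N : ℕ} [MeasurableSpace Ω] (P : Measure Ω)
    (K : Fin N → Set (Ω → ℝ)) (Y : Set (Fin N → Ω → ℝ)) : Prop :=
  ∀ k : Fin N → Ω → ℝ, ∀ y ∈ Y, (∀ i, k i ∈ K i) →
    (∀ i, ∀ᵐ ω ∂P, 0 ≤ k i ω + y i ω) →
    ∀ i, (fun ω => k i ω + y i ω) =ᵐ[P] fun _ => (0 : ℝ)

/-- `K^𝒴 = ⨉ᵢ (Kᵢ − L⁰₊(ℱᵢ_T)) + 𝒴`. -/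
def KY {N : ℕ} [MeasurableSpace Ω] (P : Measure Ω)
    (FT : Fin N → MeasurableSpace Ω)
    (K : Fin N → Set (Ω → ℝ)) (Y : Set (Fin N → Ω → ℝ)) : Set (Fin N → Ω → ℝ) :=
  { f | ∃ (k l y : Fin N → Ω → ℝ), y ∈ Y ∧ (∀ i, k i ∈ K i) ∧
      (∀ i, Measurable[FT i] (l i) ∧ (∀ᵐ ω ∂P, 0 ≤ l i ω)) ∧
      ∀ i, f i = fun ω => k i ω - l i ω + y i ω }

/-- `ℝ^N_0`: zero-sum deterministic exchanges, viewed as constant random vectors. -/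
def zeroSum (Ω : Type*) (N : ℕ) : Set (Fin N → Ω → ℝ) :=
  { y | ∃ x : Fin N → ℝ, (∑ i, x i) = 0 ∧ ∀ i, y i = fun _ => x i }

/-- `span(ℝ^N_0, Y_1, …, Y_R)`: the finite-dimensional space of exchanges generated
by `ℝ^N_0` and the random vectors `Ys 1, …, Ys R`. -/
def spanExch {N R : ℕ} (Ys : Fin R → Fin N → Ω → ℝ) : Set (Fin N → Ω → ℝ) :=
  { y | ∃ (x : Fin N → ℝ) (c : Fin R → ℝ), (∑ i, x i) = 0 ∧
      ∀ i, y i = fun ω => x i + ∑ r, c r * Ys r i ω }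

/-- `span(𝒴₀ ∪ {g})` for a vector subspace `𝒴₀`. -/
def spanWith {N : ℕ} (Y0 : Set (Fin N → Ω → ℝ)) (g : Fin N → Ω → ℝ) :
    Set (Fin N → Ω → ℝ) :=
  { y | ∃ w ∈ Y0, ∃ c : ℝ, ∀ i, y i = fun ω => w i ω + c * g i ω }

/-- Equivalent martingale measures `Mᵢₑ` for the assets in `A`, w.r.t. the filtration `F`. -/
def martMeasures {J : ℕ} [MeasurableSpace Ω] (P : Measure Ω)
    (F : ℕ → MeasurableSpace Ω) (T : ℕ) (A : Finset (Fin J))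
    (X : Fin J → ℕ → Ω → ℝ) : Set (Measure Ω) :=
  { Q | IsProbabilityMeasure Q ∧ Q ≪ P ∧ P ≪ Q ∧
      ∀ j ∈ A, (∀ t, t ≤ T → Integrable (X j t) Q) ∧
        ∀ s t, s ≤ t → t ≤ T → X j s =ᵐ[Q] Q[X j t | F s] }

/-- Equivalent collective martingale measures `ℳₑ(𝒴)`. -/
def MeY {J N : ℕ} [MeasurableSpace Ω] (P : Measure Ω)
    (F : Fin N → ℕ → MeasurableSpace Ω) (T : ℕ) (assets : Fin N → Finset (Fin J))
    (X : Fin J → ℕ → Ω → ℝ) (Y : Set (Fin N → Ω → ℝ)) : Set (Fin N → Measure Ω) :=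
  { Q | (∀ i, Q i ∈ martMeasures P (F i) T (assets i) X) ∧
      (∀ y ∈ Y, ∀ i, Integrable (y i) (Q i)) ∧
      ∀ y ∈ Y, (∑ i, ∫ ω, y i ω ∂(Q i)) ≤ 0 }

/-- `ℳ^φ_e(𝒴) = {Q ∈ ℳₑ(𝒴) : E_{Qⁱ}[|φⁱ|] < ∞ ∀ i}`. -/
def MeYphi {J N : ℕ} [MeasurableSpace Ω] (P : Measure Ω)
    (F : Fin N → ℕ → MeasurableSpace Ω) (T : ℕ) (assets : Fin N → Finset (Fin J))
    (X : Fin J → ℕ → Ω → ℝ) (Y : Set (Fin N → Ω → ℝ))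
    (φ : Fin N → Ω → ℝ) : Set (Fin N → Measure Ω) :=
  { Q | Q ∈ MeY P F T assets X Y ∧ ∀ i, Integrable (φ i) (Q i) }

/-- Closedness of a set of random vectors under componentwise `P`-a.s. convergence
of sequences (within `L⁰(Ω, 𝐅_T, P)`). -/
def ClosedAS {N : ℕ} [MeasurableSpace Ω] (P : Measure Ω)
    (FT : Fin N → MeasurableSpace Ω) (S : Set (Fin N → Ω → ℝ)) : Prop :=
  ∀ (f : ℕ → Fin N → Ω → ℝ) (g : Fin N → Ω → ℝ),
    (∀ n, f n ∈ S) → (∀ i, Measurable[FT i] (g i)) →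
    (∀ i, ∀ᵐ ω ∂P, Tendsto (fun n => f n i ω) atTop (𝓝 (g i ω))) →
    g ∈ S

/-- Collective superhedging price `ρ^𝒴₊(f)` (with `inf ∅ = +∞`). -/
noncomputable def rhoPlus {N : ℕ} [MeasurableSpace Ω] (P : Measure Ω)
    (K : Fin N → Set (Ω → ℝ)) (Y : Set (Fin N → Ω → ℝ))
    (f : Fin N → Ω → ℝ) : EReal :=
  sInf { z : EReal | ∃ m : Fin N → ℝ, z = ((∑ i, m i : ℝ) : EReal) ∧
      ∃ k : Fin N → Ω → ℝ, (∀ i, k i ∈ K i) ∧ ∃ y ∈ Y,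
        ∀ i, ∀ᵐ ω ∂P, f i ω ≤ m i + k i ω + y i ω }

/-- Collective subhedging price `ρ^𝒴₋(f)` (with `sup ∅ = −∞`). -/
noncomputable def rhoMinus {N : ℕ} [MeasurableSpace Ω] (P : Measure Ω)
    (K : Fin N → Set (Ω → ℝ)) (Y : Set (Fin N → Ω → ℝ))
    (f : Fin N → Ω → ℝ) : EReal :=
  sSup { z : EReal | ∃ m : Fin N → ℝ, z = ((∑ i, m i : ℝ) : EReal) ∧
      ∃ k : Fin N → Ω → ℝ, (∀ i, k i ∈ K i) ∧ ∃ y ∈ Y,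
        ∀ i, ∀ᵐ ω ∂P, m i + k i ω - y i ω ≤ f i ω }

/-- `ρ^𝒴₊(f)` is attained. -/
def rhoPlusAttained {N : ℕ} [MeasurableSpace Ω] (P : Measure Ω)
    (K : Fin N → Set (Ω → ℝ)) (Y : Set (Fin N → Ω → ℝ))
    (f : Fin N → Ω → ℝ) : Prop :=
  ∃ (m : Fin N → ℝ) (k y : Fin N → Ω → ℝ), y ∈ Y ∧ (∀ i, k i ∈ K i) ∧
    (∀ i, ∀ᵐ ω ∂P, f i ω ≤ m i + k i ω + y i ω) ∧
    rhoPlus P K Y f = ((∑ i, m i : ℝ) : EReal)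

/-- `ρ^𝒴₋(f)` is attained. -/
def rhoMinusAttained {N : ℕ} [MeasurableSpace Ω] (P : Measure Ω)
    (K : Fin N → Set (Ω → ℝ)) (Y : Set (Fin N → Ω → ℝ))
    (f : Fin N → Ω → ℝ) : Prop :=
  ∃ (m : Fin N → ℝ) (k y : Fin N → Ω → ℝ), y ∈ Y ∧ (∀ i, k i ∈ K i) ∧
    (∀ i, ∀ᵐ ω ∂P, m i + k i ω - y i ω ≤ f i ω) ∧
    rhoMinus P K Y f = ((∑ i, m i : ℝ) : EReal)

/-- `f` is `𝒴`-collectively replicable: `f ∈ ℝ^N + (K₁ × ⋯ × K_N) + 𝒴` in `L⁰`. -/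
def Replicable {N : ℕ} [MeasurableSpace Ω] (P : Measure Ω)
    (K : Fin N → Set (Ω → ℝ)) (Y : Set (Fin N → Ω → ℝ))
    (f : Fin N → Ω → ℝ) : Prop :=
  ∃ (m : Fin N → ℝ) (k y : Fin N → Ω → ℝ), y ∈ Y ∧ (∀ i, k i ∈ K i) ∧
    ∀ i, f i =ᵐ[P] fun ω => m i + k i ω + y i ω

/-!
All agents are pooled into one market on `Fin N × Ω`, with the σ-algebras and measures glued
slice by slice. An exchange becomes a trade made without information, before any other trade, and
unit transfers between agents generate `ℝ^N_0`; that these transfers have zero expectation says that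
all slices of a pricing measure have the same mass. Collective arbitrage, superhedging and
`ℳ_e(𝒴)` become arbitrage, superhedging and martingale measures of a list of trades ordered by
increasing information.

For such a list, no arbitrage makes the cone of positions dominating a gain closed under almost sure
convergence (induction on the trades, a measurable subsequence of strategies being extracted at each
step, after normalization where the strategies are unbounded). After a change of measure which makes
finitely many given random variables square integrable, a position outside the cone is separated
from it in `L²` by a strictly positive density, which is a fair pricing measure. Conversely such a
measure gives nonnegative expectation to every integrable position of the cone, by induction on the
trades again. Hence the initial endowments superhedging `f` are those whose sum is an upper bound
of the prices of `f`, and the duality reads `inf (upperBounds V) = sup V`.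
-/

theorem measurable_eval_index {_ : MeasurableSpace Ω} {β : Type*} [MeasurableSpace β]
    {h : ℕ → Ω → β} (hh : ∀ n, Measurable (h n)) {τ : Ω → ℕ} (hτ : Measurable τ) :
    Measurable fun ω => h (τ ω) ω :=
  (measurable_from_prod_countable_right hh : Measurable fun p : ℕ × Ω => h p.1 p.2).comp
    (hτ.prodMk measurable_id)

theorem exists_measurable_subsequence {G : MeasurableSpace Ω} {p : ℕ → ℕ → Ω → Prop}
    (hp : ∀ m n, MeasurableSet {ω | p m n ω}) (hex : ∀ m ω, ∃ n ≥ m, p m n ω) :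
    ∃ τ : ℕ → Ω → ℕ, (∀ m, Measurable (τ m)) ∧ (∀ ω, Tendsto (τ · ω) atTop atTop) ∧
      ∀ m ω, p m (τ m ω) ω := by
  classical
  refine ⟨fun m ω => Nat.find (hex m ω), fun m => measurable_find (hex m) fun n =>
    (MeasurableSet.const (n ≥ m)).inter (hp m n), fun ω => ?_, fun m ω => ?_⟩
  · exact tendsto_atTop_mono (fun m => (Nat.find_spec (hex m ω)).1) tendsto_id
  · exact (Nat.find_spec (hex m ω)).2

theorem exists_measurable_convergent_subsequence {G : MeasurableSpace Ω} {u : ℕ → Ω → ℝ}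
    (hu : ∀ n, Measurable (u n)) (hbdd : ∀ ω, BddAbove (Set.range fun n => |u n ω|)) :
    ∃ (w : Ω → ℝ) (τ : ℕ → Ω → ℕ), Measurable w ∧ (∀ m, Measurable (τ m)) ∧
      (∀ ω, Tendsto (τ · ω) atTop atTop) ∧
      ∀ ω, Tendsto (fun m => u (τ m ω) ω) atTop (𝓝 (w ω)) := by
  let w : Ω → ℝ := fun ω => limsup (fun n => u n ω) atTop
  have hw : Measurable w := Measurable.limsup hu
  have frequently_near : ∀ (m : ℕ) ω, ∃ n ≥ m, dist (u n ω) (w ω) < 1 / ((m : ℝ) + 1) := by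
    intro m ω
    obtain ⟨C, hC⟩ := hbdd ω
    have hC' : ∀ n, |u n ω| ≤ C := fun n => hC ⟨n, rfl⟩
    have hle : IsBoundedUnder (· ≤ ·) atTop fun n => u n ω :=
      isBoundedUnder_of ⟨C, fun n => (abs_le.1 (hC' n)).2⟩
    have hge : IsBoundedUnder (· ≥ ·) atTop fun n => u n ω :=
      isBoundedUnder_of ⟨-C, fun n => (abs_le.1 (hC' n)).1⟩
    have hpos : 0 < 1 / ((m : ℝ) + 1) := by positivity
    have hupper : ∀ᶠ n in atTop, u n ω < w ω + 1 / ((m : ℝ) + 1) :=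
      eventually_lt_of_limsup_lt (lt_add_of_pos_right _ hpos) hle
    have hlower : ∃ᶠ n in atTop, w ω - 1 / ((m : ℝ) + 1) < u n ω :=
      frequently_lt_of_lt_limsup hge.isCoboundedUnder_le (sub_lt_self _ hpos)
    obtain ⟨n, hn, hn', hnm⟩ :=
      (hlower.and_eventually (hupper.and (eventually_ge_atTop m))).exists
    exact ⟨n, hnm, abs_lt.2 ⟨by linarith, by linarith⟩⟩
  obtain ⟨τ, hτ, hτ_top, hnear⟩ := exists_measurable_subsequence
    (fun m n => measurableSet_lt ((hu n).dist hw) measurable_const) frequently_near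
  refine ⟨w, τ, hw, hτ, hτ_top, fun ω => tendsto_iff_dist_tendsto_zero.2 ?_⟩
  exact squeeze_zero (fun _ => dist_nonneg) (fun m => (hnear m ω).le)
    tendsto_one_div_add_atTop_nhds_zero_nat

theorem measurableSet_bddAbove_range_abs {_ : MeasurableSpace Ω} {h : ℕ → Ω → ℝ}
    (hh : ∀ n, Measurable (h n)) : MeasurableSet {ω | BddAbove (Set.range fun n => |h n ω|)} :=
  measurableSet_bddAbove_range fun n => (hh n).abs

theorem exists_measurable_diverging_subsequence {G : MeasurableSpace Ω} {h : ℕ → Ω → ℝ}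
    (hh : ∀ n, Measurable (h n)) :
    ∃ τ : ℕ → Ω → ℕ, (∀ m, Measurable (τ m)) ∧ (∀ ω, Tendsto (τ · ω) atTop atTop) ∧
      ∀ (m : ℕ) ω, ¬BddAbove (Set.range fun n => |h n ω|) → (m : ℝ) < |h (τ m ω) ω| := by
  refine exists_measurable_subsequence (p := fun m n ω =>
    ¬BddAbove (Set.range fun n => |h n ω|) → (m : ℝ) < |h n ω|) (fun m n => ?_) fun m ω => ?_
  · exact (measurableSet_bddAbove_range_abs hh).compl.imp
      (measurableSet_lt measurable_const (hh n).abs)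
  · by_contra! hbdd
    refine (hbdd m le_rfl).1 (IsBoundedUnder.bddAbove_range ⟨m, eventually_map.2 ?_⟩)
    exact (eventually_ge_atTop m).mono fun n hn => (hbdd n hn).2

theorem exists_measurable_normalization {G : MeasurableSpace Ω} {h : ℕ → Ω → ℝ}
    (hh : ∀ n, Measurable (h n)) :
    ∃ (τ : ℕ → Ω → ℕ) (c : ℕ → Ω → ℝ), (∀ m, Measurable (τ m)) ∧
      (∀ ω, Tendsto (τ · ω) atTop atTop) ∧ (∀ m, Measurable (c m)) ∧ (∀ m ω, 0 ≤ c m ω) ∧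
      (∀ ω, Tendsto (c · ω) atTop (𝓝 0)) ∧ ∀ m ω, |c m ω * h (τ m ω) ω| =
        {ω | ¬BddAbove (Set.range fun n => |h n ω|)}.indicator 1 ω := by
  obtain ⟨τ, hτ, hτ_top, hτ_lt⟩ := exists_measurable_diverging_subsequence hh
  set B : Set Ω := {ω | ¬BddAbove (Set.range fun n => |h n ω|)}
  refine ⟨τ, fun m => B.indicator fun ω => |h (τ m ω) ω|⁻¹, hτ, hτ_top, fun m => ?_,
    fun m ω => Set.indicator_nonneg (by simp) ω, fun ω => ?_, fun m ω => ?_⟩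
  · exact (measurable_eval_index hh (hτ m)).abs.inv.indicator
      (measurableSet_bddAbove_range_abs hh).compl
  · by_cases hω : ω ∈ B
    · simp only [Set.indicator_of_mem hω]
      exact tendsto_inv_atTop_zero.comp (tendsto_atTop_mono (fun m => (hτ_lt m ω hω).le)
        tendsto_natCast_atTop_atTop)
    · simp [hω]
  · by_cases hω : ω ∈ B
    · have hpos : 0 < |h (τ m ω) ω| := (Nat.cast_nonneg m).trans_lt (hτ_lt m ω hω)
      simp [hω, abs_mul, inv_mul_cancel₀ hpos.ne']
    · simp [hω]

/-- A one-shot trade with unit payoff `payoff`, in which the position is chosen with the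
information `info`. -/
structure Trade (Ω : Type*) where
  info : MeasurableSpace Ω
  payoff : Ω → ℝ

/-- The gains from a single trade. -/
def Trade.gains (a : Trade Ω) : Submodule ℝ (Ω → ℝ) where
  carrier := {k | ∃ h : Ω → ℝ, Measurable[a.info] h ∧ h * a.payoff = k}
  zero_mem' := ⟨0, measurable_const, zero_mul _⟩
  add_mem' := by
    rintro _ _ ⟨h, hh, rfl⟩ ⟨h', hh', rfl⟩
    exact ⟨h + h', hh.add hh', add_mul ..⟩
  smul_mem' := by
    rintro c _ ⟨h, hh, rfl⟩
    exact ⟨c • h, hh.const_smul c, smul_mul_assoc ..⟩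

/-- The gains in the market which offers the trades of the list `l`. -/
def gains (l : List (Trade Ω)) : Submodule ℝ (Ω → ℝ) := ⨆ a ∈ l, a.gains

theorem gains_nil : gains ([] : List (Trade Ω)) = ⊥ := by simp [gains]

theorem gains_cons (a : Trade Ω) (l : List (Trade Ω)) : gains (a :: l) = a.gains ⊔ gains l := by
  simp [gains, iSup_or, iSup_sup_eq]

theorem Trade.gains_le_gains {a : Trade Ω} {l : List (Trade Ω)} (ha : a ∈ l) :
    a.gains ≤ CollectiveArb.gains l :=
  le_iSup₂_of_le a ha le_rfl

/-- Stability of a space of gains under `G`-measurable rescaling and under switching between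
countably many gains according to a `G`-measurable rule. -/
structure Stable (G : MeasurableSpace Ω) (K : Submodule ℝ (Ω → ℝ)) : Prop where
  mul_mem : ∀ {c : Ω → ℝ}, Measurable[G] c → ∀ {k}, k ∈ K → c * k ∈ K
  eval_index_mem : ∀ {k : ℕ → Ω → ℝ}, (∀ n, k n ∈ K) → ∀ {τ : Ω → ℕ}, Measurable[G] τ →
    (fun ω => k (τ ω) ω) ∈ K

theorem stable_bot (G : MeasurableSpace Ω) : Stable G ⊥ where
  mul_mem _ _ hk := by rw [Submodule.mem_bot] at hk ⊢; rw [hk, mul_zero]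
  eval_index_mem hk τ _ := by
    simp only [Submodule.mem_bot] at hk ⊢
    ext ω
    rw [hk (τ ω)]

theorem Stable.gains_sup {G : MeasurableSpace Ω} {K : Submodule ℝ (Ω → ℝ)} {a : Trade Ω}
    (ha : G ≤ a.info) (hK : Stable G K) : Stable G (a.gains ⊔ K) where
  mul_mem {c} hc {_} hk := by
    obtain ⟨_, ⟨h, hh, rfl⟩, k', hk', rfl⟩ := Submodule.mem_sup.1 hk
    rw [mul_add, ← mul_assoc]
    exact Submodule.add_mem_sup ⟨c * h, (hc.mono ha le_rfl).mul hh, rfl⟩ (hK.mul_mem hc hk')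
  eval_index_mem {_} hk {τ} hτ := by
    choose d hd k hk hdk using fun n => Submodule.mem_sup.1 (hk n)
    choose h hh hhd using hd
    refine Submodule.mem_sup.2 ⟨_, ⟨fun ω => h (τ ω) ω,
      measurable_eval_index hh (hτ.mono ha le_rfl), rfl⟩, _, hK.eval_index_mem hk hτ, ?_⟩
    ext ω
    simp [← hdk, ← hhd]

theorem stable_gains {G : MeasurableSpace Ω} {l : List (Trade Ω)} (hl : ∀ a ∈ l, G ≤ a.info) :
    Stable G (gains l) := by
  induction l with
  | nil => exact gains_nil ▸ stable_bot G
  | cons a l ih =>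
    rw [List.forall_mem_cons] at hl
    exact gains_cons a l ▸ (ih hl.2).gains_sup hl.1

/-- No nonzero gain in `K` is nonnegative, up to null sets. -/
def NoArbitrage [MeasurableSpace Ω] (μ : Measure Ω) (K : Submodule ℝ (Ω → ℝ)) : Prop :=
  ∀ k ∈ K, 0 ≤ᵐ[μ] k → k =ᵐ[μ] 0

/-- The positions which dominate a gain in `K`, that is, from which a nonnegative position can be
reached by trading. -/
def acceptable [MeasurableSpace Ω] (μ : Measure Ω) (K : Submodule ℝ (Ω → ℝ)) : Set (Ω → ℝ) :=
  {g | ∃ k ∈ K, k ≤ᵐ[μ] g}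

/-- Closedness under almost sure convergence of sequences. -/
def IsSeqClosedAE [MeasurableSpace Ω] (μ : Measure Ω) (S : Set (Ω → ℝ)) : Prop :=
  ∀ (g : ℕ → Ω → ℝ) (g' : Ω → ℝ), (∀ n, g n ∈ S) →
    (∀ᵐ ω ∂μ, Tendsto (g · ω) atTop (𝓝 (g' ω))) → g' ∈ S

section Closedness

variable {G m0 : MeasurableSpace Ω} {μ : Measure Ω} {K : Submodule ℝ (Ω → ℝ)}

theorem NoArbitrage.mono {K' : Submodule ℝ (Ω → ℝ)} (hK : NoArbitrage μ K) (h : K' ≤ K) :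
    NoArbitrage μ K' :=
  fun k hk => hK k (h hk)

theorem NoArbitrage.ae_eq_zero_of_nonpos (hK : NoArbitrage μ K) {k : Ω → ℝ} (hk : k ∈ K)
    (hle : k ≤ᵐ[μ] 0) : k =ᵐ[μ] 0 := by
  filter_upwards [hK (-k) (K.neg_mem hk) (hle.mono fun ω hω => neg_nonneg.2 hω)] with ω hω
  exact neg_eq_zero.1 hω

theorem mem_acceptable_of_ae_le {g g' : Ω → ℝ} (hg : g ∈ acceptable μ K) (hle : g ≤ᵐ[μ] g') :
    g' ∈ acceptable μ K :=
  let ⟨k, hk, hkg⟩ := hg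
  ⟨k, hk, hkg.trans hle⟩

theorem isSeqClosedAE_acceptable_bot :
    IsSeqClosedAE μ (acceptable μ (⊥ : Submodule ℝ (Ω → ℝ))) := by
  intro g g' hg hlim
  have hg_nonneg : ∀ n, 0 ≤ᵐ[μ] g n := fun n => by
    obtain ⟨k, hk, hle⟩ := hg n
    rwa [(Submodule.mem_bot ℝ).1 hk] at hle
  refine ⟨0, zero_mem _, ?_⟩
  filter_upwards [ae_all_iff.2 hg_nonneg, hlim] with ω hω hlim
  exact ge_of_tendsto' hlim hω

theorem exists_mapClusterPt_mul_add_le (hK : Stable G K) (hcl : IsSeqClosedAE μ (acceptable μ K))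
    {D g' : Ω → ℝ} {h k g : ℕ → Ω → ℝ} (hh : ∀ n, Measurable[G] (h n))
    (hbdd : ∀ ω, BddAbove (Set.range fun n => |h n ω|)) (hk : ∀ n, k n ∈ K)
    (hle : ∀ n, h n * D + k n ≤ᵐ[μ] g n)
    (hlim : ∀ᵐ ω ∂μ, Tendsto (g · ω) atTop (𝓝 (g' ω))) :
    ∃ w : Ω → ℝ, Measurable[G] w ∧ (∀ ω, MapClusterPt (w ω) atTop (h · ω)) ∧
      ∃ k' ∈ K, w * D + k' ≤ᵐ[μ] g' := by
  obtain ⟨w, τ, hw, hτ, hτ_top, hτ_lim⟩ := exists_measurable_convergent_subsequence hh hbdd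
  obtain ⟨k', hk', hle'⟩ := hcl (fun m ω => g (τ m ω) ω - h (τ m ω) ω * D ω) (g' - w * D)
    (fun m => ⟨_, hK.eval_index_mem hk (hτ m), by
      filter_upwards [ae_all_iff.2 hle] with ω hω
      exact le_sub_iff_add_le'.2 (hω (τ m ω))⟩)
    (hlim.mono fun ω hω => (hω.comp (hτ_top ω)).sub ((hτ_lim ω).mul_const (D ω)))
  refine ⟨w, hw, fun ω => (hτ_lim ω).mapClusterPt.of_comp (hτ_top ω), k', hk', ?_⟩
  filter_upwards [hle'] with ω hω
  exact le_sub_iff_add_le'.1 hω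

/-- Dividing by the size of the positions, where these are unbounded, turns the convergent sequence
of dominated gains into a gain `w * D + k ≤ 0` with `w = ±1`, which must then vanish. -/
theorem exists_replication_of_not_bddAbove {a : Trade Ω} (hK : Stable a.info K)
    (hcl : IsSeqClosedAE μ (acceptable μ K)) (hNA : NoArbitrage μ (a.gains ⊔ K)) {g' : Ω → ℝ}
    {h k g : ℕ → Ω → ℝ} (hh : ∀ n, Measurable[a.info] (h n)) (hk : ∀ n, k n ∈ K)
    (hle : ∀ n, h n * a.payoff + k n ≤ᵐ[μ] g n)
    (hlim : ∀ᵐ ω ∂μ, Tendsto (g · ω) atTop (𝓝 (g' ω))) :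
    ∃ k₀ ∈ K, ∀ᵐ ω ∂μ, ¬BddAbove (Set.range fun n => |h n ω|) → a.payoff ω = k₀ ω := by
  obtain ⟨τ, c, hτ, hτ_top, hc, hc_nonneg, hc_lim, hc_abs⟩ := exists_measurable_normalization hh
  obtain ⟨w, hw, hw_cluster, k', hk', hle'⟩ := exists_mapClusterPt_mul_add_le hK hcl
    (D := a.payoff) (g := fun m ω => c m ω * g (τ m ω) ω) (g' := 0)
    (h := fun m ω => c m ω * h (τ m ω) ω) (k := fun m => c m * fun ω => k (τ m ω) ω)
    (fun m => (hc m).mul (measurable_eval_index hh (hτ m)))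
    (fun ω => ⟨_, Set.forall_mem_range.2 fun m => (hc_abs m ω).le⟩)
    (fun m => hK.mul_mem (hc m) (hK.eval_index_mem hk (hτ m)))
    (fun m => by
      filter_upwards [ae_all_iff.2 hle] with ω hω
      have := mul_le_mul_of_nonneg_left (hω (τ m ω)) (hc_nonneg m ω)
      simpa [mul_add, mul_assoc] using this)
    (hlim.mono fun ω hω => by simpa using (hc_lim ω).mul (hω.comp (hτ_top ω)))
  have hw_abs : ∀ ω, |w ω| = {ω | ¬BddAbove (Set.range fun n => |h n ω|)}.indicator 1 ω :=
    fun ω => (isClosed_eq continuous_abs continuous_const).mem_of_mapClusterPt (hw_cluster ω)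
      (Eventually.of_forall fun m => hc_abs m ω)
  refine ⟨-(w * k'), K.neg_mem (hK.mul_mem hw hk'), ?_⟩
  filter_upwards [hNA.ae_eq_zero_of_nonpos
    (Submodule.add_mem_sup ⟨w, hw, rfl⟩ hk') hle'] with ω hω hωB
  have hw_one : |w ω| = 1 := (hw_abs ω).trans (Set.indicator_of_mem hωB 1)
  have hsq : w ω * w ω = 1 := by rw [← abs_mul_abs_self, hw_one, one_mul]
  simp only [Pi.add_apply, Pi.mul_apply, Pi.zero_apply, Pi.neg_apply] at hω ⊢
  linear_combination w ω * hω - a.payoff ω * hsq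

theorem IsSeqClosedAE.acceptable_gains_sup {a : Trade Ω} (hK : Stable a.info K)
    (hcl : IsSeqClosedAE μ (acceptable μ K)) (hNA : NoArbitrage μ (a.gains ⊔ K)) :
    IsSeqClosedAE μ (acceptable μ (a.gains ⊔ K)) := by
  intro g g' hg hlim
  have hdecomp : ∀ n, ∃ h k : Ω → ℝ, Measurable[a.info] h ∧ k ∈ K ∧
      h * a.payoff + k ≤ᵐ[μ] g n := by
    intro n
    obtain ⟨_, hk, hle⟩ := hg n
    obtain ⟨_, ⟨h, hh, rfl⟩, k', hk', rfl⟩ := Submodule.mem_sup.1 hk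
    exact ⟨h, k', hh, hk', hle⟩
  choose h k hh hk hle using hdecomp
  obtain ⟨k₀, hk₀, hreplicate⟩ := exists_replication_of_not_bddAbove hK hcl hNA hh hk hle hlim
  set A : Set Ω := {ω | BddAbove (Set.range fun n => |h n ω|)}
  have hA : MeasurableSet[a.info] A := measurableSet_bddAbove_range_abs hh
  obtain ⟨w, hw, -, k', hk', hle'⟩ := exists_mapClusterPt_mul_add_le hK hcl
    (h := fun n => A.indicator (h n)) (k := fun n => k n + Aᶜ.indicator (h n) * k₀)
    (fun n => (hh n).indicator hA)
    (fun ω => by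
      by_cases hω : ω ∈ A
      · simp only [Set.indicator_of_mem hω]
        exact hω
      · simp [hω])
    (fun n => K.add_mem (hk n) (hK.mul_mem ((hh n).indicator hA.compl) hk₀))
    (fun n => by
      filter_upwards [hle n, hreplicate] with ω hω hωe
      by_cases hωA : ω ∈ A
      · simpa [hωA] using hω
      · simpa [hωA, ← hωe hωA, add_comm] using hω) hlim
  exact ⟨_, Submodule.add_mem_sup ⟨w, hw, rfl⟩ hk', hle'⟩

theorem isSeqClosedAE_acceptable_gains {l : List (Trade Ω)} (hl : l.Pairwise (·.info ≤ ·.info))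
    (hNA : NoArbitrage μ (gains l)) : IsSeqClosedAE μ (acceptable μ (gains l)) := by
  induction l with
  | nil => exact gains_nil ▸ isSeqClosedAE_acceptable_bot
  | cons a l ih =>
    rw [List.pairwise_cons] at hl
    rw [gains_cons] at hNA ⊢
    exact .acceptable_gains_sup (stable_gains hl.1) (ih hl.2 (hNA.mono le_sup_right)) hNA

end Closedness

section Separation

theorem exists_pos_summable_smul {E : Type*} [NormedAddCommGroup E] [NormedSpace ℝ E]
    [CompleteSpace E] (x : ℕ → E) :
    ∃ c : ℕ → ℝ, (∀ n, 0 < c n) ∧ Summable fun n => c n • x n := by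
  have hpos : ∀ n, 0 < (1 / 2 : ℝ) ^ n / (1 + ‖x n‖) := fun n => by positivity
  refine ⟨fun n => (1 / 2) ^ n / (1 + ‖x n‖), hpos, summable_geometric_two.of_norm_bounded ?_⟩
  intro n
  rw [norm_smul, Real.norm_of_nonneg (hpos n).le, div_mul_eq_mul_div]
  refine div_le_of_le_mul₀ (by positivity) (by positivity) ?_
  gcongr
  exact le_add_of_nonneg_left zero_le_one

variable [MeasurableSpace Ω] {μ : Measure Ω}

theorem ae_withDensity_ofReal_eq {z : Ω → ℝ} (hz : AEMeasurable z μ) (hpos : ∀ᵐ ω ∂μ, 0 < z ω) :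
    ae (μ.withDensity fun ω => ENNReal.ofReal (z ω)) = ae μ :=
  le_antisymm (withDensity_absolutelyContinuous μ _).ae_le
    (withDensity_absolutelyContinuous' hz.ennreal_ofReal
      (hpos.mono fun _ hω => (ENNReal.ofReal_pos.2 hω).ne')).ae_le

theorem integrable_withDensity_ofReal {z u : Ω → ℝ} (hz : AEMeasurable z μ) (hpos : 0 ≤ᵐ[μ] z) :
    Integrable u (μ.withDensity fun ω => ENNReal.ofReal (z ω)) ↔ Integrable (z * u) μ := by
  rw [integrable_withDensity_iff_integrable_smul₀' hz.ennreal_ofReal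
    (Eventually.of_forall fun _ => ENNReal.ofReal_lt_top)]
  exact integrable_congr (hpos.mono fun ω hω => by simp [ENNReal.toReal_ofReal hω])

theorem integral_withDensity_ofReal {z u : Ω → ℝ} (hz : AEMeasurable z μ) (hpos : 0 ≤ᵐ[μ] z) :
    ∫ ω, u ω ∂μ.withDensity (fun ω => ENNReal.ofReal (z ω)) = ∫ ω, z ω * u ω ∂μ := by
  rw [integral_withDensity_eq_integral_toReal_smul₀ hz.ennreal_ofReal
    (Eventually.of_forall fun _ => ENNReal.ofReal_lt_top)]
  exact integral_congr_ae (hpos.mono fun ω hω => by simp [ENNReal.toReal_ofReal hω])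

theorem exists_mem_forall_measure_pos_le {p : ENNReal} [Fact (1 ≤ p)] {C : ProperCone ℝ (Lp ℝ p μ)}
    (hC : ∀ z ∈ C, 0 ≤ z) : ∃ z ∈ C, ∀ z' ∈ C, μ {ω | 0 < z' ω} ≤ μ {ω | 0 < z ω} := by
  obtain ⟨v, -, hv_lim, hv⟩ := exists_seq_tendsto_sSup
    (S := (fun z : Lp ℝ p μ => μ {ω | 0 < z ω}) '' C) ⟨_, 0, C.zero_mem, rfl⟩ (OrderTop.bddAbove _)
  choose ζ hζ hζv using hv
  obtain ⟨c, hc, hsum⟩ := exists_pos_summable_smul ζ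
  have hcζ : ∀ n, c n • ζ n ∈ C := fun n => C.smul_mem (hζ n) (hc n).le
  refine ⟨∑' n, c n • ζ n, C.isClosed.mem_of_tendsto hsum.hasSum
    (Eventually.of_forall fun s => sum_mem fun n _ => hcζ n), fun z' hz' => ?_⟩
  refine (le_sSup (Set.mem_image_of_mem _ hz')).trans (le_of_tendsto' hv_lim fun n => ?_)
  rw [← hζv n]
  refine measure_mono_ae ?_
  have hle : c n • ζ n ≤ ∑' n, c n • ζ n := hsum.le_tsum n fun m _ => hC _ (hcζ m)
  filter_upwards [(Lp.coeFn_le _ _).2 hle, Lp.coeFn_smul (c n) (ζ n)] with ω hω hsmul hpos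
  rw [hsmul] at hω
  exact (mul_pos (hc n) hpos).trans_le hω

theorem exists_mem_forall_ae_pos [IsFiniteMeasure μ] {p : ENNReal} [Fact (1 ≤ p)]
    {C : ProperCone ℝ (Lp ℝ p μ)} (hC : ∀ z ∈ C, 0 ≤ z)
    (hcharge : ∀ A, MeasurableSet A → μ A ≠ 0 → ∃ z ∈ C, ¬∀ᵐ ω ∂μ, ω ∈ A → z ω = 0) :
    ∃ z ∈ C, ∀ᵐ ω ∂μ, 0 < z ω := by
  obtain ⟨z, hz, hmax⟩ := exists_mem_forall_measure_pos_le hC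
  have hpos_meas : MeasurableSet {ω | 0 < z ω} :=
    measurableSet_lt measurable_const (Lp.stronglyMeasurable z).measurable
  refine ⟨z, hz, ?_⟩
  by_contra hnull
  obtain ⟨z', hz', hcharge⟩ := hcharge {ω | 0 < z ω}ᶜ hpos_meas.compl hnull
  have hsub : {ω | 0 < z ω} ≤ᵐ[μ] {ω | 0 < (z + z') ω} := by
    filter_upwards [Lp.coeFn_add z z', (Lp.coeFn_nonneg _).2 (hC z' hz')] with ω hadd hω hpos
    exact (add_pos_of_pos_of_nonneg hpos hω).trans_eq hadd.symm
  have heq := ae_eq_of_ae_subset_of_measure_ge hsub (hmax _ (C.add_mem hz hz'))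
    hpos_meas.nullMeasurableSet (measure_ne_top _ _)
  refine hcharge ?_
  filter_upwards [heq, Lp.coeFn_add z z', (Lp.coeFn_nonneg _).2 (hC z hz),
    (Lp.coeFn_nonneg _).2 (hC z' hz')] with ω hiff hadd hzω hz'ω hω
  have hle : (z + z') ω ≤ 0 := not_lt.1 fun h => hω (hiff.mpr h)
  rw [hadd, Pi.add_apply] at hle
  exact le_antisymm ((le_add_of_nonneg_left hzω).trans hle) hz'ω

variable {K : Submodule ℝ (Ω → ℝ)}

/-- The cone of acceptable positions in `L²`. -/
def acceptanceCone (μ : Measure Ω) (K : Submodule ℝ (Ω → ℝ)) : PointedCone ℝ (Lp ℝ 2 μ) where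
  carrier := {u | ⇑u ∈ acceptable μ K}
  zero_mem' := ⟨0, K.zero_mem, (Lp.coeFn_zero ℝ 2 μ).symm.le⟩
  add_mem' := by
    rintro u v ⟨k, hk, hle⟩ ⟨k', hk', hle'⟩
    refine ⟨k + k', K.add_mem hk hk', ?_⟩
    filter_upwards [hle, hle', Lp.coeFn_add u v] with ω hω hω' hadd
    exact (add_le_add hω hω').trans_eq hadd.symm
  smul_mem' := by
    rintro ⟨c, hc⟩ u ⟨k, hk, hle⟩
    refine ⟨c • k, K.smul_mem c hk, ?_⟩
    filter_upwards [hle, Lp.coeFn_smul c u] with ω hω hsmul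
    exact (mul_le_mul_of_nonneg_left hω hc).trans_eq hsmul.symm

theorem isClosed_acceptanceCone (hcl : IsSeqClosedAE μ (acceptable μ K)) :
    IsClosed (acceptanceCone μ K : Set (Lp ℝ 2 μ)) := by
  refine IsSeqClosed.isClosed fun u u' hu hlim => ?_
  obtain ⟨ns, -, hns⟩ := (tendstoInMeasure_of_tendsto_Lp hlim).exists_seq_tendsto_ae
  exact hcl _ _ (fun n => hu (ns n)) hns

theorem exists_mem_innerDual_acceptanceCone_inner_neg (hcl : IsSeqClosedAE μ (acceptable μ K))
    {u : Lp ℝ 2 μ} (hu : ⇑u ∉ acceptable μ K) :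
    ∃ z ∈ ProperCone.innerDual (acceptanceCone μ K : Set (Lp ℝ 2 μ)), inner ℝ u z < 0 := by
  obtain ⟨z, hz, hneg⟩ := ProperCone.hyperplane_separation'
    (⟨acceptanceCone μ K, isClosed_acceptanceCone hcl⟩ : ProperCone ℝ (Lp ℝ 2 μ)) hu
  exact ⟨z, fun v hv => hz v hv, hneg⟩

variable [IsFiniteMeasure μ]

theorem nonneg_of_mem_innerDual_acceptanceCone {z : Lp ℝ 2 μ}
    (hz : z ∈ ProperCone.innerDual (acceptanceCone μ K : Set (Lp ℝ 2 μ))) : 0 ≤ z := by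
  refine (Lp.coeFn_nonneg z).1 (ae_nonneg_of_forall_setIntegral_nonneg
    ((Lp.memLp z).integrable one_le_two) fun A hA hμA => ?_)
  rw [← L2.inner_indicatorConstLp_one hA hμA.ne]
  refine hz ⟨0, K.zero_mem, ?_⟩
  filter_upwards [indicatorConstLp_coeFn (p := 2) (hs := hA) (hμs := hμA.ne) (c := (1 : ℝ))]
    with ω hω
  rw [hω]
  exact Set.indicator_nonneg (fun _ _ => zero_le_one) ω

theorem exists_mem_innerDual_acceptanceCone_forall_ae_pos
    (hcl : IsSeqClosedAE μ (acceptable μ K)) (hNA : NoArbitrage μ K) :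
    ∃ z ∈ ProperCone.innerDual (acceptanceCone μ K : Set (Lp ℝ 2 μ)), ∀ᵐ ω ∂μ, 0 < z ω := by
  refine exists_mem_forall_ae_pos (fun z hz => nonneg_of_mem_innerDual_acceptanceCone hz)
    fun A hA hμA => ?_
  have hcoe : ⇑(-indicatorConstLp 2 hA (measure_ne_top μ A) (1 : ℝ)) =ᵐ[μ]
      -A.indicator fun _ => (1 : ℝ) := (Lp.coeFn_neg _).trans indicatorConstLp_coeFn.neg
  have hnot : ⇑(-indicatorConstLp 2 hA (measure_ne_top μ A) (1 : ℝ)) ∉ acceptable μ K := by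
    rintro ⟨k, hk, hle⟩
    have hle' : k ≤ᵐ[μ] -A.indicator fun _ => (1 : ℝ) := hle.trans hcoe.le
    have hk0 := hNA.ae_eq_zero_of_nonpos hk (hle'.trans (Eventually.of_forall fun ω =>
      neg_nonpos.2 (Set.indicator_nonneg (fun _ _ => zero_le_one) ω)))
    refine hμA (measure_eq_zero_iff_ae_notMem.2 ?_)
    filter_upwards [hle', hk0] with ω hω h0 hωA
    norm_num [h0, hωA] at hω
  obtain ⟨z, hz, hneg⟩ := exists_mem_innerDual_acceptanceCone_inner_neg hcl hnot
  refine ⟨z, hz, fun hzero => ?_⟩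
  rw [inner_neg_left, L2.inner_indicatorConstLp_one hA (measure_ne_top μ A),
    setIntegral_congr_ae hA hzero, integral_zero, neg_zero] at hneg
  exact lt_irrefl _ hneg

theorem exists_mem_innerDual_acceptanceCone_forall_ae_pos_inner_neg
    (hcl : IsSeqClosedAE μ (acceptable μ K)) (hNA : NoArbitrage μ K) {u : Lp ℝ 2 μ}
    (hu : ⇑u ∉ acceptable μ K) :
    ∃ z ∈ ProperCone.innerDual (acceptanceCone μ K : Set (Lp ℝ 2 μ)),
      (∀ᵐ ω ∂μ, 0 < z ω) ∧ inner ℝ u z < 0 := by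
  obtain ⟨z₁, hz₁, hneg⟩ := exists_mem_innerDual_acceptanceCone_inner_neg hcl hu
  obtain ⟨z₀, hz₀, hpos⟩ := exists_mem_innerDual_acceptanceCone_forall_ae_pos hcl hNA
  obtain ⟨ε, hε, hlt⟩ := exists_pos_mul_lt (neg_pos.2 hneg) (inner ℝ u z₀)
  refine ⟨z₁ + ε • z₀, add_mem hz₁ (ProperCone.smul_mem _ hz₀ hε.le), ?_, ?_⟩
  · filter_upwards [Lp.coeFn_add z₁ (ε • z₀), Lp.coeFn_smul ε z₀, hpos,
      (Lp.coeFn_nonneg _).2 (nonneg_of_mem_innerDual_acceptanceCone hz₁)] with ω hadd hsmul h₀ h₁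
    rw [hadd, Pi.add_apply, hsmul]
    exact add_pos_of_nonneg_of_pos h₁ (mul_pos hε h₀)
  · rw [inner_add_right, real_inner_smul_right]
    linarith

theorem exists_separating_measure (hcl : IsSeqClosedAE μ (acceptable μ K)) (hNA : NoArbitrage μ K)
    {g : Ω → ℝ} (hg : MemLp g 2 μ) (hgK : g ∉ acceptable μ K) :
    ∃ Q : Measure Ω, IsFiniteMeasure Q ∧ ae Q = ae μ ∧
      (∀ u : Ω → ℝ, MemLp u 2 μ → Integrable u Q) ∧
      (∀ u ∈ acceptable μ K, MemLp u 2 μ → 0 ≤ ∫ ω, u ω ∂Q) ∧ ∫ ω, g ω ∂Q < 0 := by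
  obtain ⟨z, hz, hpos, hneg⟩ := exists_mem_innerDual_acceptanceCone_forall_ae_pos_inner_neg hcl hNA
    (u := hg.toLp g) fun h => hgK (mem_acceptable_of_ae_le h hg.coeFn_toLp.le)
  have hzm : AEMeasurable z μ := (Lp.stronglyMeasurable z).measurable.aemeasurable
  have hz_nonneg : 0 ≤ᵐ[μ] ⇑z := hpos.mono fun _ hω => hω.le
  have hz_int : Integrable z μ := (Lp.memLp z).integrable one_le_two
  have integral_eq_inner : ∀ u : Ω → ℝ, ∀ hu : MemLp u 2 μ,
      ∫ ω, u ω ∂μ.withDensity (fun ω => ENNReal.ofReal (z ω)) = inner ℝ (hu.toLp u) z := by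
    intro u hu
    rw [integral_withDensity_ofReal hzm hz_nonneg, L2.inner_def]
    exact integral_congr_ae (hu.coeFn_toLp.mono fun ω hω => by simp [hω])
  refine ⟨_, isFiniteMeasure_withDensity_ofReal hz_int.2, ae_withDensity_ofReal_eq hzm hpos,
    fun u hu => ?_, fun u huK hu => ?_, ?_⟩
  · exact (integrable_withDensity_ofReal hzm hz_nonneg).2 ((Lp.memLp z).integrable_mul hu)
  · rw [integral_eq_inner u hu]
    exact hz (mem_acceptable_of_ae_le huK hu.coeFn_toLp.symm.le)
  · rwa [integral_eq_inner g hg]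

end Separation

section Duality

theorem acceptable_congr_ae [MeasurableSpace Ω] {μ ν : Measure Ω} (h : ae μ = ae ν)
    (K : Submodule ℝ (Ω → ℝ)) : acceptable μ K = acceptable ν K := by
  simp only [acceptable, h]

theorem noArbitrage_congr_ae [MeasurableSpace Ω] {μ ν : Measure Ω} (h : ae μ = ae ν)
    {K : Submodule ℝ (Ω → ℝ)} : NoArbitrage μ K ↔ NoArbitrage ν K := by
  simp only [NoArbitrage, h]

variable {m0 : MeasurableSpace Ω} {μ Q : Measure Ω} {a : Trade Ω} {l : List (Trade Ω)}

theorem exists_ae_eq_forall_memLp_two (μ : Measure Ω) [IsFiniteMeasure μ] {s : Set (Ω → ℝ)}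
    (hs : s.Finite) (hsm : ∀ u ∈ s, Measurable u) :
    ∃ ν : Measure Ω, IsFiniteMeasure ν ∧ ae ν = ae μ ∧ ∀ u ∈ s, MemLp u 2 ν := by
  lift s to Finset (Ω → ℝ) using hs
  simp only [Finset.mem_coe] at hsm ⊢
  set z : Ω → ℝ := fun ω => (1 + ∑ u ∈ s, u ω ^ 2)⁻¹
  have hsum_nonneg : ∀ ω, 0 ≤ ∑ u ∈ s, u ω ^ 2 := fun ω => by positivity
  have hz_pos : ∀ ω, 0 < z ω := fun ω => by
    have := hsum_nonneg ω
    positivity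
  have hz_meas : Measurable z :=
    (measurable_const.add (s.measurable_fun_sum fun u hu => (hsm u hu).pow_const 2)).inv
  have hz_int : Integrable z μ := by
    refine .of_bound hz_meas.aestronglyMeasurable 1 (Eventually.of_forall fun ω => ?_)
    rw [Real.norm_of_nonneg (hz_pos ω).le]
    exact inv_le_one_of_one_le₀ (le_add_of_nonneg_right (hsum_nonneg ω))
  have hae := ae_withDensity_ofReal_eq hz_meas.aemeasurable (Eventually.of_forall hz_pos) (μ := μ)
  refine ⟨_, isFiniteMeasure_withDensity_ofReal hz_int.2, hae, fun u hu => ?_⟩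
  refine (memLp_two_iff_integrable_sq (hsm u hu).aestronglyMeasurable).2 ?_
  rw [integrable_withDensity_ofReal hz_meas.aemeasurable
    (Eventually.of_forall fun ω => (hz_pos ω).le)]
  refine .of_bound (hz_meas.mul ((hsm u hu).pow_const 2)).aestronglyMeasurable 1
    (Eventually.of_forall fun ω => ?_)
  have hle : u ω ^ 2 ≤ ∑ u ∈ s, u ω ^ 2 :=
    Finset.single_le_sum (f := fun u : Ω → ℝ => u ω ^ 2) (fun _ _ => sq_nonneg _) hu
  rw [Pi.mul_apply, Real.norm_of_nonneg (mul_nonneg (hz_pos ω).le (sq_nonneg _))]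
  exact inv_mul_le_one_of_le₀ (by linarith) (by linarith [hsum_nonneg ω])

/-- The expectation of the payoff of `a`, conditionally on the information of `a`, vanishes. -/
structure Trade.IsFair [MeasurableSpace Ω] (a : Trade Ω) (Q : Measure Ω) : Prop where
  integrable : Integrable a.payoff Q
  setIntegral_eq_zero : ∀ A, MeasurableSet[a.info] A → ∫ ω in A, a.payoff ω ∂Q = 0

theorem Trade.IsFair.integral_mul_eq_zero [IsFiniteMeasure Q] (ha : a.IsFair Q)
    (hinfo : a.info ≤ m0) {h : Ω → ℝ} (hh : Measurable[a.info] h)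
    (hint : Integrable (h * a.payoff) Q) : ∫ ω, (h * a.payoff) ω ∂Q = 0 := by
  have hzero : 0 =ᵐ[Q] Q[a.payoff | a.info] :=
    ae_eq_condExp_of_forall_setIntegral_eq hinfo ha.integrable
      (fun _ _ _ => integrableOn_zero) (fun A hA _ => by simp [ha.setIntegral_eq_zero A hA])
      aestronglyMeasurable_zero
  rw [← integral_condExp hinfo, integral_eq_zero_of_ae]
  filter_upwards [condExp_mul_of_stronglyMeasurable_left hh.stronglyMeasurable hint ha.integrable,
    hzero] with ω hmul hω
  simp [hmul, ← hω]

/-- Truncating the position `h` in `a` to `{|h| ≤ n}` makes the gain `h * a.payoff` integrable. -/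
theorem integral_nonneg_of_mem_acceptable_gains_sup [IsFiniteMeasure Q] (ha : a.IsFair Q)
    (hinfo : a.info ≤ m0) {K : Submodule ℝ (Ω → ℝ)} (hK : Stable a.info K)
    (hK_nonneg : ∀ g ∈ acceptable Q K, Integrable g Q → 0 ≤ ∫ ω, g ω ∂Q) {g : Ω → ℝ}
    (hg : g ∈ acceptable Q (a.gains ⊔ K)) (hint : Integrable g Q) : 0 ≤ ∫ ω, g ω ∂Q := by
  obtain ⟨_, hgain, hle⟩ := hg
  obtain ⟨_, ⟨h, hh, rfl⟩, k, hk, rfl⟩ := Submodule.mem_sup.1 hgain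
  set A : ℕ → Set Ω := fun n => {ω | |h ω| ≤ n}
  have hA : ∀ n, MeasurableSet[a.info] (A n) := fun n =>
    measurableSet_le (measurable_abs.comp hh) measurable_const
  have hA_mono : Monotone A := fun m n hmn ω (hω : |h ω| ≤ m) =>
    hω.trans (Nat.cast_le.2 hmn)
  have hA_univ : ⋃ n, A n = Set.univ :=
    Set.iUnion_eq_univ_iff.2 fun ω => exists_nat_ge |h ω|
  have hlim := tendsto_setIntegral_of_monotone (fun n => hinfo _ (hA n)) hA_mono
    (hint.integrableOn (s := ⋃ n, A n))
  rw [hA_univ, setIntegral_univ] at hlim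
  refine ge_of_tendsto' hlim fun n => ?_
  have hh_n : Measurable[a.info] ((A n).indicator h) := hh.indicator (hA n)
  have hint_n : Integrable ((A n).indicator h * a.payoff) Q := by
    refine ha.integrable.bdd_mul (c := n) (hh_n.mono hinfo le_rfl).aestronglyMeasurable
      (Eventually.of_forall fun ω => ?_)
    by_cases hω : ω ∈ A n
    · rw [Set.indicator_of_mem hω]
      exact hω
    · simp [hω]
  have hmem : (A n).indicator g - (A n).indicator h * a.payoff ∈ acceptable Q K := by
    have hA_ind : Measurable[a.info] ((A n).indicator fun _ => (1 : ℝ)) :=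
      Measurable.indicator measurable_const (hA n)
    refine ⟨_, hK.mul_mem hA_ind hk, ?_⟩
    filter_upwards [hle] with ω hω
    by_cases hωA : ω ∈ A n
    · simpa [hωA, le_sub_iff_add_le'] using hω
    · simp [hωA]
  have hint_g := hint.indicator (hinfo _ (hA n))
  have := hK_nonneg _ hmem (hint_g.sub hint_n)
  rwa [integral_sub' hint_g hint_n, ha.integral_mul_eq_zero hinfo hh_n hint_n, sub_zero,
    integral_indicator (hinfo _ (hA n))] at this

theorem integral_nonneg_of_mem_acceptable_gains [IsFiniteMeasure Q]
    (hl : l.Pairwise (·.info ≤ ·.info)) (hinfo : ∀ a ∈ l, a.info ≤ m0)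
    (hfair : ∀ a ∈ l, a.IsFair Q) :
    ∀ g ∈ acceptable Q (gains l), Integrable g Q → 0 ≤ ∫ ω, g ω ∂Q := by
  induction l with
  | nil =>
    rintro g ⟨k, hk, hle⟩ -
    rw [gains_nil, Submodule.mem_bot] at hk
    exact integral_nonneg_of_ae (hk ▸ hle)
  | cons a l ih =>
    rw [List.pairwise_cons] at hl
    rw [List.forall_mem_cons] at hinfo hfair
    rw [gains_cons]
    intro g
    exact integral_nonneg_of_mem_acceptable_gains_sup hfair.1 hinfo.1 (stable_gains hl.1)
      (ih hl.2 hinfo.2 hfair.2)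

theorem exists_isFair_integral_neg [IsFiniteMeasure μ] (hl : l.Pairwise (·.info ≤ ·.info))
    (hinfo : ∀ a ∈ l, a.info ≤ m0) (hpayoff : ∀ a ∈ l, Measurable a.payoff)
    (hNA : NoArbitrage μ (gains l)) {s : Set (Ω → ℝ)} (hs : s.Finite)
    (hsm : ∀ u ∈ s, Measurable u) {g : Ω → ℝ} (hg : Measurable g)
    (hgK : g ∉ acceptable μ (gains l)) :
    ∃ Q : Measure Ω, IsFiniteMeasure Q ∧ ae Q = ae μ ∧ (∀ a ∈ l, a.IsFair Q) ∧
      (∀ u ∈ s, Integrable u Q) ∧ ∫ ω, g ω ∂Q < 0 := by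
  obtain ⟨ν, _, hae, hmemLp⟩ := exists_ae_eq_forall_memLp_two μ
    (s := insert g (s ∪ Trade.payoff '' {a | a ∈ l}))
    ((hs.union (l.finite_toSet.image _)).insert g) (by
      rintro u (rfl | hu | ⟨a, ha, rfl⟩)
      exacts [hg, hsm u hu, hpayoff a ha])
  rw [← acceptable_congr_ae hae] at hgK
  rw [← noArbitrage_congr_ae hae] at hNA
  obtain ⟨Q, hQ, hQae, hint, hnonneg, hneg⟩ := exists_separating_measure
    (isSeqClosedAE_acceptable_gains hl hNA) hNA (hmemLp g (Set.mem_insert _ _)) hgK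
  refine ⟨Q, hQ, hQae.trans hae, fun a ha => ?_,
    fun u hu => hint u (hmemLp u (.inr (.inl hu))), hneg⟩
  have hLp : MemLp a.payoff 2 ν := hmemLp _ (.inr (.inr ⟨a, ha, rfl⟩))
  refine ⟨hint _ hLp, fun A hA => ?_⟩
  have hmem : A.indicator a.payoff ∈ gains l := Trade.gains_le_gains ha
    ⟨A.indicator fun _ => 1, Measurable.indicator measurable_const hA, by
      ext ω; by_cases hω : ω ∈ A <;> simp [hω]⟩
  have hLp_A : MemLp (A.indicator a.payoff) 2 ν := hLp.indicator (hinfo a ha _ hA)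
  have hpos := hnonneg _ ⟨_, hmem, .rfl⟩ hLp_A
  have hnegpos := hnonneg _ ⟨_, neg_mem hmem, .rfl⟩ hLp_A.neg
  rw [integral_neg', neg_nonneg] at hnegpos
  rw [← integral_indicator (hinfo a ha _ hA)]
  exact le_antisymm hnegpos hpos

end Duality

section Pool

variable {ι : Type*}

/-- The σ-algebra of the sets in `ι × Ω` whose slice at each `i` belongs to `G i`. -/
@[reducible] def poolSpace (G : ι → MeasurableSpace Ω) : MeasurableSpace (ι × Ω) :=
  ⨅ i, (G i).map (Prod.mk i)

theorem measurableSet_poolSpace_iff {G : ι → MeasurableSpace Ω} {A : Set (ι × Ω)} :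
    MeasurableSet[poolSpace G] A ↔ ∀ i, MeasurableSet[G i] (Prod.mk i ⁻¹' A) := by
  simp [MeasurableSpace.measurableSet_iInf, MeasurableSpace.map_def]

theorem measurable_poolSpace_iff {β : Type*} [MeasurableSpace β] {G : ι → MeasurableSpace Ω}
    {h : ι × Ω → β} :
    Measurable[poolSpace G] h ↔ ∀ i, Measurable[G i] fun ω => h (i, ω) :=
  ⟨fun hh i _ hs => measurableSet_poolSpace_iff.1 (hh hs) i,
    fun hh _ hs => measurableSet_poolSpace_iff.2 fun i => hh i hs⟩

theorem poolSpace_mono {G G' : ι → MeasurableSpace Ω} (h : ∀ i, G i ≤ G' i) :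
    poolSpace G ≤ poolSpace G' :=
  iInf_mono fun i => MeasurableSpace.map_mono (h i)

theorem poolSpace_le [Countable ι] [MeasurableSpace ι] [MeasurableSingletonClass ι]
    {m0 : MeasurableSpace Ω} {G : ι → MeasurableSpace Ω} (h : ∀ i, G i ≤ m0) :
    poolSpace G ≤ (inferInstance : MeasurableSpace (ι × Ω)) :=
  fun A hA => (measurableSet_setOfPred (p := (· ∈ A))).2 <|
    measurable_from_prod_countable_right fun i =>
      measurableSet_setOfPred.1 (h i _ (measurableSet_poolSpace_iff.1 hA i))

variable [Fintype ι] [MeasurableSpace ι] {m0 : MeasurableSpace Ω} {Q Q' : ι → Measure Ω}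

/-- The measure on `ι × Ω` whose slice at `i` is `Q i`. -/
noncomputable def poolMeasure (Q : ι → Measure Ω) : Measure (ι × Ω) :=
  ∑ i, (Q i).map (Prod.mk i)

instance [∀ i, IsFiniteMeasure (Q i)] : IsFiniteMeasure (poolMeasure Q) := by
  unfold poolMeasure
  infer_instance

theorem poolMeasure_smul (c : ENNReal) : poolMeasure (fun i => c • Q i) = c • poolMeasure Q := by
  simp only [poolMeasure, Measure.map_smul, Finset.smul_sum]

variable [MeasurableSingletonClass ι]

theorem ae_poolMeasure_iff {p : ι × Ω → Prop} :
    (∀ᵐ x ∂poolMeasure Q, p x) ↔ ∀ i, ∀ᵐ ω ∂Q i, p (i, ω) := by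
  rw [poolMeasure, ae_finsetSum_measure_iff]
  simp [(measurableEmbedding_prodMk_left _).ae_map_iff]

theorem ae_poolMeasure_eq_iff :
    ae (poolMeasure Q) = ae (poolMeasure Q') ↔ ∀ i, ae (Q i) = ae (Q' i) := by
  refine ⟨fun h i => Filter.ext fun s => ?_, fun h => Filter.ext fun s => ?_⟩
  · have hs : ∀ Q : ι → Measure Ω,
        s ∈ ae (Q i) ↔ {x : ι × Ω | x.1 = i → x.2 ∈ s} ∈ ae (poolMeasure Q) := by
      intro Q
      refine Iff.trans ?_ ae_poolMeasure_iff.symm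
      refine ⟨fun hs j => ?_, fun hs => (hs i).mono fun ω hω => hω rfl⟩
      obtain rfl | hj := eq_or_ne j i
      · exact Filter.mem_of_superset hs fun ω hω _ => hω
      · exact Eventually.of_forall fun ω hω => absurd hω hj
    rw [hs, hs, h]
  · refine ae_poolMeasure_iff.trans (Iff.trans ?_ ae_poolMeasure_iff.symm)
    simp only [h]

theorem integrable_poolMeasure_iff {g : ι × Ω → ℝ} :
    Integrable g (poolMeasure Q) ↔ ∀ i, Integrable (fun ω => g (i, ω)) (Q i) := by
  rw [poolMeasure, integrable_finsetSum_measure]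
  simp [(measurableEmbedding_prodMk_left _).integrable_map_iff, Function.comp_def]

theorem integral_poolMeasure {g : ι × Ω → ℝ} (hg : Integrable g (poolMeasure Q)) :
    ∫ x, g x ∂poolMeasure Q = ∑ i, ∫ ω, g (i, ω) ∂Q i := by
  have hg_map := hg
  rw [poolMeasure, integrable_finsetSum_measure] at hg_map
  rw [poolMeasure, integral_finsetSum_measure hg_map]
  simp [(measurableEmbedding_prodMk_left _).integral_map]

theorem setIntegral_poolMeasure {g : ι × Ω → ℝ} (hg : Integrable g (poolMeasure Q))
    {A : Set (ι × Ω)} (hA : MeasurableSet A) :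
    ∫ x in A, g x ∂poolMeasure Q = ∑ i, ∫ ω in Prod.mk i ⁻¹' A, g (i, ω) ∂Q i := by
  rw [← integral_indicator hA, integral_poolMeasure (hg.indicator hA)]
  refine Finset.sum_congr rfl fun i _ => ?_
  rw [← integral_indicator (measurable_prodMk_left hA)]
  rfl

theorem poolMeasure_comap (μ : Measure (ι × Ω)) :
    poolMeasure (fun i => μ.comap (Prod.mk i)) = μ := by
  have hdisj : Pairwise (Function.onFun Disjoint fun i : ι => Set.range (Prod.mk (β := Ω) i)) := by
    intro i j hij
    refine Set.disjoint_left.2 ?_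
    rintro _ ⟨ω, rfl⟩ ⟨ω', h⟩
    exact hij (congrArg Prod.fst h).symm
  have hcover : ⋃ i : ι, Set.range (Prod.mk (β := Ω) i) = Set.univ := by
    ext ⟨i, ω⟩
    simp
  simp only [poolMeasure, (measurableEmbedding_prodMk_left _).map_comap]
  rw [← Measure.sum_fintype, ← Measure.restrict_iUnion hdisj
    fun i => (measurableEmbedding_prodMk_left i).measurableSet_range, hcover, Measure.restrict_univ]

theorem isFair_pool_iff {G : ι → MeasurableSpace Ω} (hG : ∀ i, G i ≤ m0) {D : ι × Ω → ℝ} :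
    (⟨poolSpace G, D⟩ : Trade (ι × Ω)).IsFair (poolMeasure Q) ↔
      ∀ i, (⟨G i, fun ω => D (i, ω)⟩ : Trade Ω).IsFair (Q i) := by
  classical
  constructor
  · intro h i
    refine ⟨integrable_poolMeasure_iff.1 h.integrable i, fun A hA => ?_⟩
    have hslice : ∀ j, Prod.mk j ⁻¹' ({i} ×ˢ A) = if j = i then A else ∅ := fun j => by
      ext ω
      by_cases hj : j = i <;> simp [hj]
    have hB : MeasurableSet[poolSpace G] ({i} ×ˢ A) := measurableSet_poolSpace_iff.2 fun j => by
      rw [hslice]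
      split_ifs with hj
      · exact hj ▸ hA
      · exact @MeasurableSet.empty _ (G j)
    have hzero := h.setIntegral_eq_zero _ hB
    rw [setIntegral_poolMeasure h.integrable (poolSpace_le hG _ hB),
      Finset.sum_eq_single_of_mem i (Finset.mem_univ i)
        fun j _ hj => by rw [hslice, if_neg hj, Measure.restrict_empty, integral_zero_measure],
      hslice, if_pos rfl] at hzero
    exact hzero
  · intro h
    have hD : Integrable D (poolMeasure Q) := integrable_poolMeasure_iff.2 fun i => (h i).integrable
    refine ⟨hD, fun A hA => ?_⟩
    rw [setIntegral_poolMeasure hD (poolSpace_le hG _ hA)]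
    exact Finset.sum_eq_zero fun i _ =>
      (h i).setIntegral_eq_zero _ (measurableSet_poolSpace_iff.1 hA i)

end Pool

section Martingale

variable {G m0 : MeasurableSpace Ω} {P Q : Measure Ω}

theorem Trade.isFair_bot_iff {D : Ω → ℝ} :
    (⟨⊥, D⟩ : Trade Ω).IsFair Q ↔ Integrable D Q ∧ ∫ ω, D ω ∂Q = 0 := by
  refine ⟨fun h => ⟨h.integrable, ?_⟩, fun h => ⟨h.1, fun A hA => ?_⟩⟩
  · simpa using h.setIntegral_eq_zero _ MeasurableSet.univ
  · obtain rfl | rfl := MeasurableSpace.measurableSet_bot_iff.1 hA <;> simp [h.2]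

theorem Trade.isFair_zero : (⟨G, 0⟩ : Trade Ω).IsFair Q :=
  ⟨integrable_zero _ _ _, by simp⟩

theorem Trade.IsFair.smul_measure {a : Trade Ω} (ha : a.IsFair Q) {c : ENNReal} (hc : c ≠ ⊤) :
    a.IsFair (c • Q) where
  integrable := ha.integrable.smul_measure hc
  setIntegral_eq_zero A hA := by
    rw [Measure.restrict_smul, integral_smul_measure, ha.setIntegral_eq_zero A hA, smul_zero]

theorem ae_eq_ae_iff : ae Q = ae P ↔ Q ≪ P ∧ P ≪ Q := by
  rw [le_antisymm_iff, Measure.ae_le_iff_absolutelyContinuous,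
    Measure.ae_le_iff_absolutelyContinuous]

theorem ae_eq_condExp_iff_forall_setIntegral_eq [IsFiniteMeasure Q] (hG : G ≤ m0)
    {u v : Ω → ℝ} (hu : Integrable u Q) (hv : Integrable v Q) (hu_meas : Measurable[G] u) :
    u =ᵐ[Q] Q[v | G] ↔ ∀ A, MeasurableSet[G] A → ∫ ω in A, u ω ∂Q = ∫ ω in A, v ω ∂Q := by
  refine ⟨fun h A hA => ?_, fun h => ?_⟩
  · rw [setIntegral_congr_ae₀ (hG _ hA).nullMeasurableSet (h.mono fun ω hω _ => hω),
      setIntegral_condExp hG hv hA]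
  · exact ae_eq_condExp_of_forall_setIntegral_eq hG hv (fun _ _ _ => hu.integrableOn)
      (fun A hA _ => h A hA) hu_meas.stronglyMeasurable.aestronglyMeasurable

theorem isFair_sub_iff {u v : Ω → ℝ} (hu : Integrable u Q)
    (hv : Integrable v Q) : (⟨G, v - u⟩ : Trade Ω).IsFair Q ↔
      ∀ A, MeasurableSet[G] A → ∫ ω in A, u ω ∂Q = ∫ ω in A, v ω ∂Q := by
  have hsub : ∀ A, ∫ ω in A, (v - u) ω ∂Q = ∫ ω in A, v ω ∂Q - ∫ ω in A, u ω ∂Q := fun A =>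
    integral_sub' hv.integrableOn hu.integrableOn
  refine ⟨fun h A hA => ?_, fun h => ⟨hv.sub hu, fun A hA => ?_⟩⟩
  · exact (sub_eq_zero.1 ((hsub A).symm.trans (h.setIntegral_eq_zero A hA))).symm
  · exact (hsub A).trans (sub_eq_zero.2 (h A hA).symm)

theorem forall_ae_eq_condExp_iff_forall_isFair [IsFiniteMeasure Q] {F : ℕ → MeasurableSpace Ω}
    {T : ℕ} (hF : Monotone F) (hFle : ∀ t, F t ≤ m0)
    {X : ℕ → Ω → ℝ} (hX : ∀ t ≤ T, Measurable[F t] (X t)) (hint : ∀ t ≤ T, Integrable (X t) Q) :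
    (∀ s t, s ≤ t → t ≤ T → X s =ᵐ[Q] Q[X t | F s]) ↔
      ∀ s < T, (⟨F s, X (s + 1) - X s⟩ : Trade Ω).IsFair Q := by
  have hstep : ∀ s t, s ≤ t → t ≤ T → (X s =ᵐ[Q] Q[X t | F s] ↔
      ∀ A, MeasurableSet[F s] A → ∫ ω in A, X s ω ∂Q = ∫ ω in A, X t ω ∂Q) := fun s t hst ht =>
    ae_eq_condExp_iff_forall_setIntegral_eq (hFle s) (hint s (hst.trans ht)) (hint t ht)
      (hX s (hst.trans ht))
  refine ⟨fun h s hs => ?_, fun h s t hst ht => (hstep s t hst ht).2 fun A hA => ?_⟩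
  · rw [isFair_sub_iff (hint s hs.le) (hint (s + 1) hs), ← hstep s (s + 1) s.le_succ hs]
    exact h s (s + 1) s.le_succ hs
  · induction t, hst using Nat.le_induction with
    | base => rfl
    | succ t hst ih =>
      rw [ih (by lia)]
      exact (isFair_sub_iff (hint t (by lia)) (hint (t + 1) ht)).1 (h t ht) A (hF hst _ hA)

theorem mem_martMeasures_iff {F : ℕ → MeasurableSpace Ω} {T J : ℕ} (hF : Monotone F)
    (hFle : ∀ t, F t ≤ m0) {A : Finset (Fin J)} {X : Fin J → ℕ → Ω → ℝ}
    (hX : ∀ j ∈ A, ∀ t ≤ T, Measurable[F t] (X j t)) :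
    Q ∈ martMeasures P F T A X ↔ IsProbabilityMeasure Q ∧ ae Q = ae P ∧ ∀ j ∈ A,
      (∀ t ≤ T, Integrable (X j t) Q) ∧
        ∀ s < T, (⟨F s, X j (s + 1) - X j s⟩ : Trade Ω).IsFair Q := by
  rw [ae_eq_ae_iff, and_assoc]
  refine and_congr_right fun _ => and_congr_right' (and_congr_right' (forall₂_congr fun j hj => ?_))
  exact and_congr_right fun hint =>
    forall_ae_eq_condExp_iff_forall_isFair hF hFle (hX j hj) hint

end Martingale

section Market

variable {N J R T : ℕ} {F : Fin N → ℕ → MeasurableSpace Ω} {assets : Fin N → Finset (Fin J)}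
  {X : Fin J → ℕ → Ω → ℝ} {Ys : Fin R → Fin N → Ω → ℝ}

/-- The space of gains `gainsSet F T A X`. -/
def gainsSubmodule (F : ℕ → MeasurableSpace Ω) (T : ℕ) (A : Finset (Fin J))
    (X : Fin J → ℕ → Ω → ℝ) : Submodule ℝ (Ω → ℝ) where
  carrier := gainsSet F T A X
  zero_mem' := ⟨0, fun _ _ _ _ _ => measurable_const, by ext; simp⟩
  add_mem' := by
    rintro _ _ ⟨H, hH, rfl⟩ ⟨H', hH', rfl⟩
    refine ⟨H + H', fun j hj s hs hsT => (hH j hj s hs hsT).add (hH' j hj s hs hsT), ?_⟩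
    ext ω
    simp only [Pi.add_apply, add_mul, Finset.sum_add_distrib]
  smul_mem' := by
    rintro c _ ⟨H, hH, rfl⟩
    refine ⟨c • H, fun j hj s hs hsT => (hH j hj s hs hsT).const_smul c, ?_⟩
    ext ω
    simp only [Pi.smul_apply, smul_eq_mul, Finset.mul_sum, mul_assoc]

theorem mem_gainsSubmodule_of_mul_increment {G : ℕ → MeasurableSpace Ω} {A : Finset (Fin J)}
    {j : Fin J} (hj : j ∈ A) {s : ℕ} (hs : s < T) {h : Ω → ℝ} (hh : Measurable[G s] h) :
    h * (X j (s + 1) - X j s) ∈ gainsSubmodule G T A X := by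
  refine ⟨Pi.single j (Pi.single (s + 1) h), fun j' _ s' _ _ => ?_, ?_⟩
  · obtain rfl | hj' := eq_or_ne j' j
    · obtain rfl | hs' := eq_or_ne s' (s + 1)
      · simpa using hh
      · rw [Pi.single_eq_same, Pi.single_eq_of_ne hs']
        exact measurable_const
    · rw [Pi.single_eq_of_ne hj']
      exact measurable_const
  · ext ω
    rw [Finset.sum_eq_single_of_mem j hj fun j' _ hj' => by simp [hj'],
      Finset.sum_eq_single_of_mem (s + 1) (by simpa using hs) fun s' _ hs' => by simp [hs']]
    simp

/-- The transfer of one unit from agent `0` to agent `i`. -/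
def transfer (Ω : Type*) [NeZero N] (i : Fin N) : Fin N → Ω → ℝ :=
  fun i' _ => Pi.single (M := fun _ => ℝ) i 1 i' - Pi.single (M := fun _ => ℝ) 0 1 i'

theorem sum_smul_transfer [NeZero N] (x : Fin N → ℝ) :
    ∑ i, x i • transfer Ω i = fun i _ => x i - Pi.single (M := fun _ => ℝ) 0 (∑ j, x j) i := by
  ext i ω
  simp [transfer, mul_sub, Finset.sum_sub_distrib, Pi.single_apply]

theorem spanExch_eq_span [NeZero N] :
    spanExch Ys = Submodule.span ℝ (Set.range (transfer Ω) ∪ Set.range Ys) := by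
  ext y
  simp only [Submodule.span_union, SetLike.mem_coe, Submodule.mem_sup,
    Submodule.mem_span_range_iff_exists_fun]
  constructor
  · rintro ⟨x, c, hx, hy⟩
    refine ⟨_, ⟨x, sum_smul_transfer x⟩, _, ⟨c, rfl⟩, ?_⟩
    ext i ω
    simp [hx, hy]
  · rintro ⟨_, ⟨x, rfl⟩, _, ⟨c, rfl⟩, rfl⟩
    refine ⟨x - Pi.single 0 (∑ j, x j), c, by simp [Finset.sum_sub_distrib], fun i => ?_⟩
    ext ω
    simp [sum_smul_transfer]

/-- The price of asset `j` at time `t` for the agents who trade it, and `0` for the others. -/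
def poolPrice (assets : Fin N → Finset (Fin J)) (X : Fin J → ℕ → Ω → ℝ) (j : Fin J) (t : ℕ) :
    Fin N × Ω → ℝ :=
  fun p => if j ∈ assets p.1 then X j t p.2 else 0

/-- The opportunity to enter the exchange `y`, scaled by a constant. -/
@[simps] def exchange (y : Fin N → Ω → ℝ) : Trade (Fin N × Ω) where
  info := ⊥
  payoff := Function.uncurry y

/-- The opportunity for each agent who trades asset `j` to hold it from time `s` to `s + 1`. -/
@[simps] def assetTrade (F : Fin N → ℕ → MeasurableSpace Ω) (assets : Fin N → Finset (Fin J))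
    (X : Fin J → ℕ → Ω → ℝ) (j : Fin J) (s : ℕ) : Trade (Fin N × Ω) where
  info := poolSpace fun i => F i s
  payoff := poolPrice assets X j (s + 1) - poolPrice assets X j s

/-- The pooled market of all agents, on `Fin N × Ω`: exchanges between them are trades made without
information, and the others are trades in the assets. -/
def market (F : Fin N → ℕ → MeasurableSpace Ω) (T : ℕ) (assets : Fin N → Finset (Fin J))
    (X : Fin J → ℕ → Ω → ℝ) (Ys : Fin R → Fin N → Ω → ℝ) [NeZero N] : List (Trade (Fin N × Ω)) :=
  (List.ofFn fun i => exchange (transfer Ω i)) ++ (List.ofFn fun r => exchange (Ys r)) ++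
    (List.range T).flatMap fun s => List.ofFn fun j => assetTrade F assets X j s

theorem Trade.gains_exchange_le {y : Fin N → Ω → ℝ} {S : Submodule ℝ (Fin N → Ω → ℝ)}
    (hy : y ∈ S) : (exchange y).gains ≤ S.comap (LinearEquiv.curry ℝ ℝ (Fin N) Ω).toLinearMap := by
  rintro _ ⟨h, hh, rfl⟩
  obtain ⟨c, rfl⟩ := eq_const_of_measurable_bot hh
  exact S.smul_mem c hy

theorem uncurry_mem_gains_exchange (y : Fin N → Ω → ℝ) :
    Function.uncurry y ∈ (exchange y).gains :=
  ⟨1, measurable_const, one_mul _⟩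

variable [NeZero N]

theorem forall_mem_market_iff {p : Trade (Fin N × Ω) → Prop} :
    (∀ a ∈ market F T assets X Ys, p a) ↔ (∀ i, p (exchange (transfer Ω i))) ∧
      (∀ r, p (exchange (Ys r))) ∧ ∀ j, ∀ s < T, p (assetTrade F assets X j s) := by
  simp only [market, List.mem_append, List.mem_ofFn, List.mem_flatMap, List.mem_range, or_imp,
    forall_and, and_assoc, forall_exists_index, and_imp, forall_apply_eq_imp_iff]
  exact and_congr_right' <| and_congr_right'
    ⟨fun h j s hs => h _ s hs j rfl, by rintro h _ s hs j rfl; exact h j s hs⟩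

theorem pairwise_market (hF : ∀ i, Monotone (F i)) :
    (market F T assets X Ys).Pairwise (·.info ≤ ·.info) := by
  rw [market, List.append_assoc, List.pairwise_append, List.pairwise_append, List.pairwise_flatMap]
  simp only [List.pairwise_ofFn, List.forall_mem_ofFn_iff]
  exact ⟨fun _ _ _ => le_rfl, ⟨fun _ _ _ => le_rfl, ⟨fun _ _ _ _ _ => le_rfl,
    List.pairwise_lt_range.imp fun hst _ _ => poolSpace_mono fun i => hF i hst.le⟩,
    fun _ _ _ => bot_le⟩, fun _ _ _ => bot_le⟩

theorem uncurry_mem_gains_market {k : Fin N → Ω → ℝ}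
    (hk : ∀ i, k i ∈ gainsSet (F i) T (assets i) X) :
    Function.uncurry k ∈ gains (market F T assets X Ys) := by
  choose H hH hkH using hk
  set H' : Fin J → ℕ → Fin N × Ω → ℝ := fun j s p =>
    if j ∈ assets p.1 then H p.1 j (s + 1) p.2 else 0
  have hsum : Function.uncurry k = ∑ j, ∑ s ∈ Finset.range T,
      H' j s * (poolPrice assets X j (s + 1) - poolPrice assets X j s) := by
    ext ⟨i, ω⟩
    rw [Function.uncurry_apply_pair, hkH, Finset.sum_apply,
      ← Finset.sum_subset (Finset.subset_univ (assets i)) fun j _ hj => by simp [H', hj]]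
    refine Finset.sum_congr rfl fun j hj => ?_
    rw [Finset.sum_apply, ← Finset.Ico_add_one_right_eq_Icc, Finset.sum_Ico_eq_sum_range]
    simp [H', poolPrice, hj, add_comm 1]
  rw [hsum]
  refine sum_mem fun j _ => sum_mem fun s hs => ?_
  have hs : s < T := Finset.mem_range.1 hs
  refine Trade.gains_le_gains ((forall_mem_market_iff.1 fun _ => id).2.2 j s hs)
    ⟨H' j s, measurable_poolSpace_iff.2 fun i => ?_, rfl⟩
  by_cases hj : j ∈ assets i
  · simpa [H', hj] using hH i j hj (s + 1) (by lia) (by lia)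
  · simp only [H', hj, if_false]
    exact measurable_const

theorem gains_market : gains (market F T assets X Ys) =
    (Submodule.pi Set.univ (fun i => gainsSubmodule (F i) T (assets i) X) ⊔
      Submodule.span ℝ (Set.range (transfer Ω) ∪ Set.range Ys)).comap
        (LinearEquiv.curry ℝ ℝ (Fin N) Ω).toLinearMap := by
  apply le_antisymm
  · refine iSup₂_le (forall_mem_market_iff.2 ⟨fun i => Trade.gains_exchange_le ?_,
      fun r => Trade.gains_exchange_le ?_, fun j s hs => ?_⟩)
    · exact Submodule.mem_sup_right (Submodule.subset_span (.inl ⟨i, rfl⟩))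
    · exact Submodule.mem_sup_right (Submodule.subset_span (.inr ⟨r, rfl⟩))
    · rintro _ ⟨h, hh, rfl⟩
      refine Submodule.mem_sup_left fun i _ => ?_
      change (fun ω => (h * (assetTrade F assets X j s).payoff) (i, ω)) ∈
        gainsSubmodule (F i) T (assets i) X
      by_cases hj : j ∈ assets i
      · convert mem_gainsSubmodule_of_mul_increment hj hs (measurable_poolSpace_iff.1 hh i) using 1
        ext ω
        simp [poolPrice, hj]
      · convert (gainsSubmodule (F i) T (assets i) X).zero_mem using 1
        ext ω
        simp [poolPrice, hj]
  · have htrades := forall_mem_market_iff.1 fun a (ha : a ∈ market F T assets X Ys) =>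
      Trade.gains_le_gains ha
    rw [Submodule.comap_equiv_eq_map_symm, Submodule.map_le_iff_le_comap]
    refine sup_le (fun k hk => uncurry_mem_gains_market fun i => hk i trivial)
      (Submodule.span_le.2 (Set.union_subset ?_ ?_))
    · rintro _ ⟨i, rfl⟩
      exact htrades.1 i (uncurry_mem_gains_exchange _)
    · rintro _ ⟨r, rfl⟩
      exact htrades.2.1 r (uncurry_mem_gains_exchange _)

theorem mem_gains_market_iff {g : Fin N × Ω → ℝ} : g ∈ gains (market F T assets X Ys) ↔
    ∃ k : Fin N → Ω → ℝ, (∀ i, k i ∈ gainsSet (F i) T (assets i) X) ∧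
      ∃ y ∈ spanExch Ys, ∀ p, g p = k p.1 p.2 + y p.1 p.2 := by
  rw [gains_market, spanExch_eq_span, Submodule.mem_comap, Submodule.mem_sup]
  constructor
  · rintro ⟨k, hk, y, hy, hky⟩
    exact ⟨k, fun i => hk i trivial, y, hy, fun p => (congr_fun₂ hky p.1 p.2).symm⟩
  · rintro ⟨k, hk, y, hy, hky⟩
    exact ⟨k, fun i _ => hk i, y, hy, by ext i ω; exact (hky (i, ω)).symm⟩

end Market

section PoolMarket

variable {N J R T : ℕ} {F : Fin N → ℕ → MeasurableSpace Ω} {assets : Fin N → Finset (Fin J)}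
  {X : Fin J → ℕ → Ω → ℝ} {Ys : Fin R → Fin N → Ω → ℝ} {m0 : MeasurableSpace Ω} {P : Measure Ω}
  {Q : Fin N → Measure Ω} {μ : Measure (Fin N × Ω)}

theorem isFair_exchange_poolMeasure_iff {y : Fin N → Ω → ℝ} :
    (exchange y).IsFair (poolMeasure Q) ↔
      (∀ i, Integrable (y i) (Q i)) ∧ ∑ i, ∫ ω, y i ω ∂Q i = 0 := by
  rw [exchange, Trade.isFair_bot_iff, integrable_poolMeasure_iff]
  refine and_congr_right fun h => ?_
  rw [integral_poolMeasure (integrable_poolMeasure_iff.2 h)]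
  rfl

theorem isFair_assetTrade_poolMeasure_iff (hFle : ∀ i t, F i t ≤ m0) {j : Fin J} {s : ℕ} :
    (assetTrade F assets X j s).IsFair (poolMeasure Q) ↔
      ∀ i, j ∈ assets i → (⟨F i s, X j (s + 1) - X j s⟩ : Trade Ω).IsFair (Q i) := by
  rw [assetTrade, isFair_pool_iff fun i => hFle i s]
  refine forall_congr' fun i => ?_
  by_cases hj : j ∈ assets i
  · simp only [Pi.sub_apply, poolPrice, hj, if_true, forall_const]
    rfl
  · simp only [Pi.sub_apply, poolPrice, hj, if_false, sub_zero, IsEmpty.forall_iff, iff_true]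
    exact Trade.isFair_zero

theorem integrable_poolPrice_iff {j : Fin J} {t : ℕ} :
    Integrable (poolPrice assets X j t) (poolMeasure Q) ↔
      ∀ i, j ∈ assets i → Integrable (X j t) (Q i) := by
  rw [integrable_poolMeasure_iff]
  refine forall_congr' fun i => ?_
  by_cases hj : j ∈ assets i <;> simp [poolPrice, hj]

theorem measurable_poolPrice (hX : ∀ i, ∀ j ∈ assets i, ∀ t ≤ T, Measurable (X j t)) (j : Fin J)
    {t : ℕ} (ht : t ≤ T) : Measurable (poolPrice assets X j t) := by
  refine measurable_from_prod_countable_right fun i => ?_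
  by_cases hj : j ∈ assets i <;> simp [poolPrice, hj, hX i j, ht]

theorem neg_mem_spanExch {y : Fin N → Ω → ℝ} (hy : y ∈ spanExch Ys) : -y ∈ spanExch Ys := by
  obtain ⟨x, c, hx, hy⟩ := hy
  refine ⟨-x, -c, by simp [hx], fun i => ?_⟩
  ext ω
  simp [hy, add_comm]

theorem sum_integral_spanExch_nonpos_iff :
    (∀ y ∈ spanExch Ys, ∑ i, ∫ ω, y i ω ∂Q i ≤ 0) ↔
      ∀ y ∈ spanExch Ys, ∑ i, ∫ ω, y i ω ∂Q i = 0 := by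
  refine ⟨fun h y hy => (h y hy).antisymm ?_, fun h y hy => (h y hy).le⟩
  simpa [integral_neg] using h (-y) (neg_mem_spanExch hy)

variable [NeZero N]

theorem forall_isFair_exchange_iff :
    (∀ y ∈ spanExch Ys, (exchange y).IsFair μ) ↔ (∀ i, (exchange (transfer Ω i)).IsFair μ) ∧
      ∀ r, (exchange (Ys r)).IsFair μ := by
  rw [spanExch_eq_span]
  refine ⟨fun h => ⟨fun i => h _ (Submodule.subset_span (.inl ⟨i, rfl⟩)),
    fun r => h _ (Submodule.subset_span (.inr ⟨r, rfl⟩))⟩, fun ⟨htransfer, hYs⟩ y hy => ?_⟩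
  induction hy using Submodule.span_induction with
  | mem y hy => obtain ⟨i, rfl⟩ | ⟨r, rfl⟩ := hy; exacts [htransfer i, hYs r]
  | zero => exact Trade.isFair_zero
  | add y y' _ _ h h' =>
    rw [exchange, Trade.isFair_bot_iff] at h h' ⊢
    exact ⟨h.1.add h'.1, (integral_add h.1 h'.1).trans (by rw [h.2, h'.2, add_zero])⟩
  | smul c y _ h =>
    rw [exchange, Trade.isFair_bot_iff] at h ⊢
    exact ⟨h.1.const_mul c,
      (integral_const_mul c (Function.uncurry y)).trans (by rw [h.2, mul_zero])⟩

theorem noArbitrage_market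
    (h : NCA P (fun i => gainsSet (F i) T (assets i) X) (spanExch Ys)) :
    NoArbitrage (poolMeasure fun _ : Fin N => P) (gains (market F T assets X Ys)) := by
  intro g hg hg_nonneg
  obtain ⟨k, hk, y, hy, hgky⟩ := mem_gains_market_iff.1 hg
  refine ae_poolMeasure_iff.2 fun i => ?_
  have hky_nonneg : ∀ i, ∀ᵐ ω ∂P, 0 ≤ k i ω + y i ω := fun i =>
    (ae_poolMeasure_iff.1 hg_nonneg i).mono fun ω hω => hω.trans_eq (hgky (i, ω))
  filter_upwards [h k y hy hk hky_nonneg i] with ω hω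
  exact (hgky (i, ω)).trans hω

theorem info_le_of_mem_market (hFle : ∀ i t, F i t ≤ m0) :
    ∀ a ∈ market F T assets X Ys, a.info ≤ (inferInstance : MeasurableSpace (Fin N × Ω)) :=
  forall_mem_market_iff.2
    ⟨fun _ => bot_le, fun _ => bot_le, fun _ s _ => poolSpace_le fun i => hFle i s⟩

theorem measurable_payoff_of_mem_market (hX : ∀ i, ∀ j ∈ assets i, ∀ t ≤ T, Measurable (X j t))
    (hYs : ∀ r i, Measurable (Ys r i)) :
    ∀ a ∈ market F T assets X Ys, Measurable a.payoff :=
  forall_mem_market_iff.2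
    ⟨fun i => measurable_from_prod_countable_right fun i' => by
        simp only [exchange_payoff, Function.uncurry_apply_pair, transfer, measurable_const],
      fun r => measurable_from_prod_countable_right (hYs r),
      fun j _ hs => (measurable_poolPrice hX j hs).sub (measurable_poolPrice hX j hs.le)⟩

theorem mem_MeY_iff (hF : ∀ i, Monotone (F i)) (hFle : ∀ i t, F i t ≤ m0)
    (hX : ∀ i, ∀ j ∈ assets i, ∀ t ≤ T, Measurable[F i t] (X j t)) :
    Q ∈ MeY P F T assets X (spanExch Ys) ↔ (∀ i, IsProbabilityMeasure (Q i)) ∧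
      ae (poolMeasure Q) = ae (poolMeasure fun _ => P) ∧
      (∀ j, ∀ t ≤ T, Integrable (poolPrice assets X j t) (poolMeasure Q)) ∧
      ∀ a ∈ market F T assets X Ys, a.IsFair (poolMeasure Q) := by
  rw [forall_mem_market_iff, ← and_assoc (c := ∀ j, _), ← forall_isFair_exchange_iff]
  simp only [MeY, Set.mem_ofPred_eq, mem_martMeasures_iff (hF _) (hFle _) (hX _), forall_and,
    ae_poolMeasure_eq_iff, integrable_poolPrice_iff, isFair_exchange_poolMeasure_iff,
    isFair_assetTrade_poolMeasure_iff hFle, sum_integral_spanExch_nonpos_iff]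
  grind

theorem exists_smul_eq_poolMeasure [IsFiniteMeasure μ] (hμ : μ ≠ 0)
    (h : ∀ i, (exchange (transfer Ω i)).IsFair μ) :
    ∃ c : ENNReal, c ≠ 0 ∧ c ≠ ⊤ ∧ ∃ Q : Fin N → Measure Ω,
      (∀ i, IsProbabilityMeasure (Q i)) ∧ c • μ = poolMeasure Q := by
  set ν : Fin N → Measure Ω := fun i => μ.comap (Prod.mk i)
  have hν : poolMeasure ν = μ := poolMeasure_comap μ
  have hmass : ∀ i, ν i Set.univ = ν 0 Set.univ := fun i => by
    have hsum := (isFair_exchange_poolMeasure_iff.1 (hν.symm ▸ h i)).2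
    rw [← measureReal_eq_measureReal_iff, ← sub_eq_zero]
    simpa [transfer, mul_sub, Finset.sum_sub_distrib, Pi.single_apply] using hsum
  have hmass_ne : ν 0 Set.univ ≠ 0 := fun h0 => hμ <| by
    have hν_zero : ∀ i, ν i = 0 := fun i => Measure.measure_univ_eq_zero.1 ((hmass i).trans h0)
    rw [← hν, poolMeasure]
    simp [hν_zero]
  refine ⟨(ν 0 Set.univ)⁻¹, ENNReal.inv_ne_zero.2 (measure_ne_top _ _),
    ENNReal.inv_ne_top.2 hmass_ne, fun i => (ν 0 Set.univ)⁻¹ • ν i, fun i => ⟨?_⟩, ?_⟩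
  · rw [Measure.smul_apply, smul_eq_mul, hmass i,
      ENNReal.inv_mul_cancel hmass_ne (measure_ne_top _ _)]
  · rw [poolMeasure_smul, hν]

theorem exists_mem_MeYphi_sum_integral_neg [IsFiniteMeasure P] (hF : ∀ i, Monotone (F i))
    (hFle : ∀ i t, F i t ≤ m0) (hX : ∀ i, ∀ j ∈ assets i, ∀ t ≤ T, Measurable[F i t] (X j t))
    (hYs : ∀ r i, Measurable (Ys r i))
    (hNCA : NCA P (fun i => gainsSet (F i) T (assets i) X) (spanExch Ys))
    {φ : Fin N → Ω → ℝ} (hφ : ∀ i, Measurable (φ i)) {g : Fin N × Ω → ℝ} (hg : Measurable g)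
    (hgK : g ∉ acceptable (poolMeasure fun _ => P) (gains (market F T assets X Ys))) :
    ∃ Q ∈ MeYphi P F T assets X (spanExch Ys) φ, ∑ i, ∫ ω, g (i, ω) ∂Q i < 0 := by
  have hX_meas : ∀ i, ∀ j ∈ assets i, ∀ t ≤ T, Measurable (X j t) :=
    fun i j hj t ht => (hX i j hj t ht).mono (hFle i t) le_rfl
  set s : Set (Fin N × Ω → ℝ) :=
    insert g <| insert (Function.uncurry φ) (Set.image2 (poolPrice assets X) Set.univ (Set.Iic T))
  have hs : s.Finite := (Set.finite_univ.image2 _ (Set.finite_Iic T)).insert _ |>.insert _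
  have hs_meas : ∀ u ∈ s, Measurable u := by
    rintro _ (rfl | rfl | ⟨j, -, t, ht, rfl⟩)
    exacts [hg, measurable_from_prod_countable_right hφ, measurable_poolPrice hX_meas j ht]
  obtain ⟨μ, _, hμ_ae, hμ_fair, hμ_int, hμ_neg⟩ := exists_isFair_integral_neg
    (pairwise_market hF) (info_le_of_mem_market hFle) (measurable_payoff_of_mem_market hX_meas hYs)
    (noArbitrage_market hNCA) hs hs_meas hg hgK
  have hμ_ne : μ ≠ 0 := by rintro rfl; simp at hμ_neg
  obtain ⟨c, hc, hc_top, Q, hQ, hcμ⟩ :=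
    exists_smul_eq_poolMeasure hμ_ne (forall_mem_market_iff.1 hμ_fair).1
  have hint : ∀ u ∈ s, Integrable u (poolMeasure Q) := fun u hu =>
    hcμ ▸ (hμ_int u hu).smul_measure hc_top
  refine ⟨Q, ⟨(mem_MeY_iff hF hFle hX).2 ⟨hQ, ?_, fun j t ht => hint _ ?_, ?_⟩, ?_⟩, ?_⟩
  · rw [← hμ_ae, ← hcμ, Measure.ae_ennreal_smul_measure_eq hc]
  · exact .inr (.inr ⟨j, trivial, t, ht, rfl⟩)
  · exact fun a ha => hcμ ▸ (hμ_fair a ha).smul_measure hc_top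
  · exact integrable_poolMeasure_iff.1 (hint _ (.inr (.inl rfl)))
  · rw [← integral_poolMeasure (hint g (.inl rfl)), ← hcμ, integral_smul_measure]
    exact mul_neg_of_pos_of_neg (ENNReal.toReal_pos hc hc_top) hμ_neg

end PoolMarket

section Superhedging

section ERealDuality

variable {V : Set ℝ}

theorem bot_lt_sSup_image_coe (hV : V.Nonempty) : ⊥ < sSup ((↑) '' V : Set EReal) :=
  let ⟨v, hv⟩ := hV
  (EReal.bot_lt_coe v).trans_le (le_sSup ⟨v, hv, rfl⟩)

theorem exists_mem_upperBounds_coe_eq_sSup (hV : V.Nonempty)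
    (h : sSup ((↑) '' V : Set EReal) < ⊤) :
    ∃ u ∈ upperBounds V, (u : EReal) = sSup ((↑) '' V) := by
  lift sSup ((↑) '' V : Set EReal) to ℝ using ⟨h.ne, (bot_lt_sSup_image_coe hV).ne'⟩ with u hu
  exact ⟨u, fun v hv => EReal.coe_le_coe_iff.1 (hu ▸ le_sSup ⟨v, hv, rfl⟩), rfl⟩

theorem sInf_image_coe_upperBounds (hV : V.Nonempty) :
    sInf ((↑) '' upperBounds V : Set EReal) = sSup ((↑) '' V) := by
  apply le_antisymm
  · obtain h | h := eq_top_or_lt_top (sSup ((↑) '' V : Set EReal))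
    · exact h ▸ le_top
    · obtain ⟨u, hu, huV⟩ := exists_mem_upperBounds_coe_eq_sSup hV h
      exact huV ▸ sInf_le ⟨u, hu, rfl⟩
  · exact le_sInf <| Set.forall_mem_image.2 fun u hu => sSup_le <| Set.forall_mem_image.2
      fun v hv => EReal.coe_le_coe_iff.2 (hu hv)

end ERealDuality

variable {N J R T : ℕ} {F : Fin N → ℕ → MeasurableSpace Ω} {assets : Fin N → Finset (Fin J)}
  {X : Fin J → ℕ → Ω → ℝ} {Ys : Fin R → Fin N → Ω → ℝ} {m0 : MeasurableSpace Ω} {P : Measure Ω}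

/-- `f` is superhedged by the initial endowments `m`, that is, `f ≤ m + k + y` for some gains
`k i ∈ K i` and some exchange `y ∈ Y`. -/
def Superhedges (P : Measure Ω) (K : Fin N → Set (Ω → ℝ)) (Y : Set (Fin N → Ω → ℝ))
    (m : Fin N → ℝ) (f : Fin N → Ω → ℝ) : Prop :=
  ∃ k : Fin N → Ω → ℝ, (∀ i, k i ∈ K i) ∧ ∃ y ∈ Y,
    ∀ i, ∀ᵐ ω ∂P, f i ω ≤ m i + k i ω + y i ω

variable [NeZero N]

theorem superhedges_iff_mem_acceptable {m : Fin N → ℝ} {f : Fin N → Ω → ℝ} :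
    Superhedges P (fun i => gainsSet (F i) T (assets i) X) (spanExch Ys) m f ↔
      (fun p : Fin N × Ω => m p.1 - f p.1 p.2) ∈
        acceptable (poolMeasure fun _ => P) (gains (market F T assets X Ys)) := by
  constructor
  · rintro ⟨k, hk, y, hy, hle⟩
    have hky : (fun p : Fin N × Ω => k p.1 p.2 + y p.1 p.2) ∈ gains (market F T assets X Ys) :=
      mem_gains_market_iff.2 ⟨k, hk, y, hy, fun _ => rfl⟩
    refine ⟨_, neg_mem hky, ae_poolMeasure_iff.2 fun i => ?_⟩
    filter_upwards [hle i] with ω hω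
    rw [Pi.neg_apply]
    linarith
  · rintro ⟨g, hg, hle⟩
    obtain ⟨k, hk, y, hy, hgky⟩ := mem_gains_market_iff.1 (neg_mem hg)
    refine ⟨k, hk, y, hy, fun i => ?_⟩
    filter_upwards [ae_poolMeasure_iff.1 hle i] with ω hω
    have := hgky (i, ω)
    rw [Pi.neg_apply] at this
    linarith

theorem sum_integral_nonneg_of_mem_acceptable (hF : ∀ i, Monotone (F i))
    (hFle : ∀ i t, F i t ≤ m0) (hX : ∀ i, ∀ j ∈ assets i, ∀ t ≤ T, Measurable[F i t] (X j t))
    {Q : Fin N → Measure Ω} (hQ : Q ∈ MeY P F T assets X (spanExch Ys)) {g : Fin N × Ω → ℝ}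
    (hgK : g ∈ acceptable (poolMeasure fun _ => P) (gains (market F T assets X Ys)))
    (hg : ∀ i, Integrable (fun ω => g (i, ω)) (Q i)) : 0 ≤ ∑ i, ∫ ω, g (i, ω) ∂Q i := by
  obtain ⟨hQ_prob, hQ_ae, -, hfair⟩ := (mem_MeY_iff hF hFle hX).1 hQ
  rw [← acceptable_congr_ae hQ_ae] at hgK
  rw [← integrable_poolMeasure_iff] at hg
  rw [← integral_poolMeasure hg]
  exact integral_nonneg_of_mem_acceptable_gains (pairwise_market hF)
    (info_le_of_mem_market hFle) hfair g hgK hg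

theorem NoArbitrage.neg_one_notMem_acceptable {μ : Measure Ω} [NeZero μ]
    {K : Submodule ℝ (Ω → ℝ)} (hK : NoArbitrage μ K) : -1 ∉ acceptable μ K := by
  rintro ⟨k, hk, hle⟩
  have hk_zero := hK.ae_eq_zero_of_nonpos hk (hle.mono fun ω hω => hω.trans (by simp))
  obtain ⟨ω, hω_zero, hω_le⟩ := (hk_zero.and hle).exists
  norm_num [hω_zero] at hω_le

section Main

variable [IsProbabilityMeasure P] (hF : ∀ i, Monotone (F i)) (hFle : ∀ i t, F i t ≤ m0)
  (hX : ∀ i, ∀ j ∈ assets i, ∀ t ≤ T, Measurable[F i t] (X j t)) (hYs : ∀ r i, Measurable (Ys r i))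
  (hNCA : NCA P (fun i => gainsSet (F i) T (assets i) X) (spanExch Ys))
  {f φ : Fin N → Ω → ℝ} (hφ : ∀ i, Measurable (φ i))

include hF hFle hX hYs hNCA hφ

theorem nonempty_MeYphi : (MeYphi P F T assets X (spanExch Ys) φ).Nonempty := by
  have : NeZero (poolMeasure fun _ : Fin N => P) := ⟨fun h => NeZero.ne P <| by
    simpa [h] using ae_poolMeasure_iff (Q := fun _ : Fin N => P) (p := fun _ => False)⟩
  obtain ⟨Q, hQ, -⟩ := exists_mem_MeYphi_sum_integral_neg hF hFle hX hYs hNCA hφ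
    measurable_const.neg (noArbitrage_market hNCA).neg_one_notMem_acceptable
  exact ⟨Q, hQ⟩

theorem superhedges_iff_forall_sum_integral_le (hf : ∀ i, Measurable (f i))
    (hfφ : ∀ i, ∀ᵐ ω ∂P, |f i ω| ≤ φ i ω) {m : Fin N → ℝ} :
    Superhedges P (fun i => gainsSet (F i) T (assets i) X) (spanExch Ys) m f ↔
      ∀ Q ∈ MeYphi P F T assets X (spanExch Ys) φ, ∑ i, ∫ ω, f i ω ∂Q i ≤ ∑ i, m i := by
  have hint : ∀ Q ∈ MeYphi P F T assets X (spanExch Ys) φ, ∀ i, Integrable (f i) (Q i) :=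
    fun Q hQ i => (hQ.2 i).mono' (hf i).aestronglyMeasurable ((hQ.1.1 i).2.1.ae_le (hfφ i))
  have hsum : ∀ Q ∈ MeYphi P F T assets X (spanExch Ys) φ,
      ∑ i, ∫ ω, (m i - f i ω) ∂Q i = ∑ i, m i - ∑ i, ∫ ω, f i ω ∂Q i := by
    intro Q hQ
    rw [← Finset.sum_sub_distrib]
    refine Finset.sum_congr rfl fun i _ => ?_
    have := (hQ.1.1 i).1
    rw [integral_sub (integrable_const _) (hint Q hQ i)]
    simp
  rw [superhedges_iff_mem_acceptable]
  refine ⟨fun hacc Q hQ => ?_, fun hle => ?_⟩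
  · have hnonneg := sum_integral_nonneg_of_mem_acceptable hF hFle hX hQ.1 hacc fun i =>
      have := (hQ.1.1 i).1
      (integrable_const (m i)).sub (hint Q hQ i)
    exact sub_nonneg.1 (hnonneg.trans_eq (hsum Q hQ))
  · by_contra hacc
    obtain ⟨Q, hQ, hneg⟩ := exists_mem_MeYphi_sum_integral_neg hF hFle hX hYs hNCA hφ
      (measurable_from_prod_countable_right fun i => (hf i).const_sub (m i)) hacc
    exact (sub_nonneg.2 (hle Q hQ)).not_gt ((hsum Q hQ).symm.trans_lt hneg)

end Main

theorem rhoPlus_eq_sInf_image_coe_upperBounds {K : Fin N → Set (Ω → ℝ)}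
    {Y : Set (Fin N → Ω → ℝ)} {f : Fin N → Ω → ℝ} {V : Set ℝ}
    (h : ∀ m, Superhedges P K Y m f ↔ ∑ i, m i ∈ upperBounds V) :
    rhoPlus P K Y f = sInf ((↑) '' upperBounds V) := by
  refine congrArg sInf (Set.ext fun z => ⟨?_, ?_⟩)
  · rintro ⟨m, rfl, hm⟩
    exact ⟨_, (h m).1 hm, rfl⟩
  · rintro ⟨u, hu, rfl⟩
    have hsum : ∑ i, Pi.single (M := fun _ : Fin N => ℝ) 0 u i = u := by simp
    exact ⟨_, by rw [hsum], (h _).2 (by rwa [hsum])⟩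

theorem rhoPlus_duality_of_superhedges_iff {K : Fin N → Set (Ω → ℝ)}
    {Y : Set (Fin N → Ω → ℝ)} {f : Fin N → Ω → ℝ} {V : Set ℝ} (hV : V.Nonempty)
    (h : ∀ m, Superhedges P K Y m f ↔ ∑ i, m i ∈ upperBounds V) :
    rhoPlus P K Y f = sSup ((↑) '' V) ∧ ⊥ < rhoPlus P K Y f ∧
      (rhoPlus P K Y f < ⊤ → rhoPlusAttained P K Y f) := by
  have hρ : rhoPlus P K Y f = sSup ((↑) '' V) :=
    (rhoPlus_eq_sInf_image_coe_upperBounds h).trans (sInf_image_coe_upperBounds hV)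
  refine ⟨hρ, hρ ▸ bot_lt_sSup_image_coe hV, fun hlt => ?_⟩
  obtain ⟨u, hu, huV⟩ := exists_mem_upperBounds_coe_eq_sSup hV (hρ ▸ hlt)
  have hsum : ∑ i, Pi.single (M := fun _ : Fin N => ℝ) 0 u i = u := by simp
  obtain ⟨k, hk, y, hy, hle⟩ := (h _).2 (hsum.symm ▸ hu)
  exact ⟨_, k, y, hy, hk, hle, by rw [hρ, hsum, huV]⟩

end Superhedging

theorem collective_pricing_hedging_duality_general {m0 : MeasurableSpace Ω} (P : Measure Ω)
    [IsProbabilityMeasure P] (T J N : ℕ) [NeZero N] (F : Fin N → ℕ → MeasurableSpace Ω)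
    (hFmono : ∀ i, Monotone (F i)) (hFle : ∀ i t, F i t ≤ m0) (X : Fin J → ℕ → Ω → ℝ)
    (assets : Fin N → Finset (Fin J))
    (hadapted : ∀ i, ∀ j ∈ assets i, ∀ t ≤ T, Measurable[F i t] (X j t))
    (R : ℕ) (Ys : Fin R → Fin N → Ω → ℝ) (hYsmeas : ∀ r i, Measurable (Ys r i))
    (hNCA : NCA P (fun i => gainsSet (F i) T (assets i) X) (spanExch Ys))
    (f φ : Fin N → Ω → ℝ) (hfmeas : ∀ i, Measurable (f i)) (hφmeas : ∀ i, Measurable (φ i))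
    (hdom_f : ∀ i, ∀ᵐ ω ∂P, |f i ω| ≤ φ i ω) :
    (MeYphi P F T assets X (spanExch Ys) φ).Nonempty ∧
    rhoPlus P (fun i => gainsSet (F i) T (assets i) X) (spanExch Ys) f
      = sSup ((fun Q : Fin N → Measure Ω => ((∑ i, ∫ ω, f i ω ∂(Q i) : ℝ) : EReal)) ''
          (MeYphi P F T assets X (spanExch Ys) φ)) ∧
    ⊥ < rhoPlus P (fun i => gainsSet (F i) T (assets i) X) (spanExch Ys) f ∧
    (rhoPlus P (fun i => gainsSet (F i) T (assets i) X) (spanExch Ys) f < ⊤ →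
      rhoPlusAttained P (fun i => gainsSet (F i) T (assets i) X) (spanExch Ys) f) := by
  have hne : (MeYphi P F T assets X (spanExch Ys) φ).Nonempty :=
    nonempty_MeYphi hFmono hFle hadapted hYsmeas hNCA hφmeas
  have hdual := rhoPlus_duality_of_superhedges_iff
    (hne.image fun Q => ∑ i, ∫ ω, f i ω ∂Q i) fun m => by
      rw [superhedges_iff_forall_sum_integral_le hFmono hFle hadapted hYsmeas hNCA hφmeas hfmeas
        hdom_f, mem_upperBounds, Set.forall_mem_image]
  rw [Set.image_image] at hdual
  exact ⟨hne, hdual⟩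

/-- collective pricing-hedging duality (Theorem duality:R). -/
theorem collective_pricing_hedging_duality
    {Ω : Type*} [m0 : MeasurableSpace Ω]
    (P : Measure Ω) [IsProbabilityMeasure P]
    (T J N : ℕ) (hT : 1 ≤ T) (hJ : 1 ≤ J) (hN : 1 ≤ N)
    (F : Fin N → ℕ → MeasurableSpace Ω)
    (hFmono : ∀ i, Monotone (F i))
    (hFle : ∀ i t, F i t ≤ m0)
    (hFzero : ∀ i, ∀ A : Set Ω, MeasurableSet[F i 0] A → P A = 0 ∨ P A = 1)
    (X : Fin J → ℕ → Ω → ℝ)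
    (assets : Fin N → Finset (Fin J))
    (hassets : ∀ i, (assets i).Nonempty)
    (hcover : ∀ j, ∃ i, j ∈ assets i)
    (hadapted : ∀ i, ∀ j ∈ assets i, ∀ t, t ≤ T → Measurable[F i t] (X j t))
    (R : ℕ) (Ys : Fin R → Fin N → Ω → ℝ)
    (hYsmeas : ∀ r i, Measurable[F i T] (Ys r i))
    (hNCA : NCA P (fun i => gainsSet (F i) T (assets i) X) (spanExch Ys))
    (f φ : Fin N → Ω → ℝ)
    (hfmeas : ∀ i, Measurable[F i T] (f i))
    (hφmeas : ∀ i, Measurable[F i T] (φ i))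
    (hdom_f : ∀ i, ∀ᵐ ω ∂P, |f i ω| ≤ φ i ω)
    (hdom_Y : ∀ r, ∀ i, ∀ᵐ ω ∂P, |Ys r i ω| ≤ φ i ω) :
    (MeYphi P F T assets X (spanExch Ys) φ).Nonempty ∧
    rhoPlus P (fun i => gainsSet (F i) T (assets i) X) (spanExch Ys) f
      = sSup ((fun Q : Fin N → Measure Ω => ((∑ i, ∫ ω, f i ω ∂(Q i) : ℝ) : EReal)) ''
          (MeYphi P F T assets X (spanExch Ys) φ)) ∧
    ⊥ < rhoPlus P (fun i => gainsSet (F i) T (assets i) X) (spanExch Ys) f ∧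
    (rhoPlus P (fun i => gainsSet (F i) T (assets i) X) (spanExch Ys) f < ⊤ →
      rhoPlusAttained P (fun i => gainsSet (F i) T (assets i) X) (spanExch Ys) f) := by
  have : NeZero N := ⟨by lia⟩
  exact collective_pricing_hedging_duality_general P T J N F hFmono hFle X assets hadapted R Ys
    (fun r i => (hYsmeas r i).mono (hFle i T) le_rfl) hNCA f φ
    (fun i => (hfmeas i).mono (hFle i T) le_rfl) (fun i => (hφmeas i).mono (hFle i T) le_rfl) hdom_f

end CollectiveArb
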